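/- arXiv:1304.2328 — 3 statements merged into one kernel-verified Lean document; each statement's English description precedes it below -/
import Mathlib

section
/- Fix 1 ≤ k < min(m,n) and let Φ : M_m ⊗ M_n → M_m ⊗ M_n be a linear map. The following are equivalent: (a) ‖Φ(X)‖_{S(k)} = ‖X‖_{S(k)} for all X ∈ M_m ⊗ M_n; (b) ‖Φ(X)‖_{γ,k} = ‖X‖_{γ,k} for all X ∈ M_m ⊗ M_n; (c) Φ is a composition of one or more of the following maps: X ↦ UXV where U and V are unitaries each of the form U₁ ⊗ U₂ (U₁ ∈ M_m, U₂ ∈ M_n unitary) or, when m = n, of the form S(U₁ ⊗ U₂) with S the swap operator defined by S(a ⊗ b) = b ⊗ a; the transpose map T; and, in the case k = 1 only, the partial transpose map id_m ⊗ T. -/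
open scoped Kronecker ComplexOrder
open Matrix

namespace Ent

variable {ι κ : Type*} [Fintype ι] [Fintype κ]

/-- Inner product ⟨v,w⟩ = Σᵢ conj(v i) * (w i) (conjugate-linear in the first argument). -/
noncomputable def vinner (v w : ι → ℂ) : ℂ := dotProduct (star v) w

/-- An elementary (product) tensor a ⊗ b in ℂ^ι ⊗ ℂ^κ. -/
def prodVec (a : ι → ℂ) (b : κ → ℂ) : ι × κ → ℂ := fun p => a p.1 * b p.2

/-- `v` has Schmidt rank at most `k`. -/
def SchmidtRankLE (k : ℕ) (v : ι × κ → ℂ) : Prop :=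
  ∃ (a : Fin k → ι → ℂ) (b : Fin k → κ → ℂ), v = ∑ i, prodVec (a i) (b i)

/-- The rank-one operator |v⟩⟨w|. -/
noncomputable def ketBra (v : ι → ℂ) (w : κ → ℂ) : Matrix ι κ ℂ :=
  Matrix.vecMulVec v (star w)

/-- A finite family of vectors is orthonormal. -/
def Orthonormal' {N : Type*} [DecidableEq N] (v : N → ι → ℂ) : Prop :=
  ∀ i j, vinner (v i) (v j) = if i = j then 1 else 0

/-- The S(k)-norm of `X ∈ M_ι ⊗ M_κ`. -/
noncomputable def SkNorm (k : ℕ) (X : Matrix (ι × κ) (ι × κ) ℂ) : ℝ :=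
  sSup { r | ∃ v w : ι × κ → ℂ, vinner v v = 1 ∧ vinner w w = 1 ∧
    SchmidtRankLE k v ∧ SchmidtRankLE k w ∧
    r = ‖vinner v (X.mulVec w)‖ }

/-- The product numerical radius r_k^⊗. -/
noncomputable def prodRad (k : ℕ) (Y : Matrix (ι × κ) (ι × κ) ℂ) : ℝ :=
  sSup { r | ∃ v : ι × κ → ℂ, vinner v v = 1 ∧ SchmidtRankLE k v ∧
    r = ‖vinner v (Y.mulVec v)‖ }

/-- The norm ‖·‖_{γ,k}. -/
noncomputable def gammaNorm (k : ℕ) (X : Matrix (ι × κ) (ι × κ) ℂ) : ℝ :=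
  sInf { r | ∃ (N : ℕ) (c : Fin N → ℂ) (v w : Fin N → (ι × κ → ℂ)),
    (∀ i, vinner (v i) (v i) = 1 ∧ vinner (w i) (w i) = 1 ∧
      SchmidtRankLE k (v i) ∧ SchmidtRankLE k (w i)) ∧
    X = ∑ i, c i • ketBra (v i) (w i) ∧
    r = ∑ i, ‖c i‖ }

/-- `ρ` is a density matrix. -/
def IsDensity (ρ : Matrix ι ι ℂ) : Prop := ρ.PosSemidef ∧ ρ.trace = 1

/-- `ρ` has Schmidt number at most `k`: it is a convex combination of projections onto
unit vectors of Schmidt rank at most `k`. -/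
def SchmidtNumLE (k : ℕ) (ρ : Matrix (ι × κ) (ι × κ) ℂ) : Prop :=
  ∃ (N : ℕ) (p : Fin N → ℝ) (v : Fin N → (ι × κ → ℂ)),
    (∀ i, 0 ≤ p i ∧ vinner (v i) (v i) = 1 ∧ SchmidtRankLE k (v i)) ∧
    (∑ i, p i) = 1 ∧ ρ = ∑ i, p i • ketBra (v i) (v i)

/-- The robustness norm R_k on Hermitian operators. -/
noncomputable def Rk (k : ℕ) (Y : Matrix (ι × κ) (ι × κ) ℂ) : ℝ :=
  sInf { r | ∃ (c₁ c₂ : ℝ) (ρ₁ ρ₂ : Matrix (ι × κ) (ι × κ) ℂ),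
    0 ≤ c₁ ∧ 0 ≤ c₂ ∧ IsDensity ρ₁ ∧ IsDensity ρ₂ ∧
    SchmidtNumLE k ρ₁ ∧ SchmidtNumLE k ρ₂ ∧
    Y = c₁ • ρ₁ - c₂ • ρ₂ ∧ r = c₁ + c₂ }

/-- `Y` is k-block positive: ⟨v|Y|v⟩ ≥ 0 for every unit vector of Schmidt rank at most `k`. -/
def KBlockPos (k : ℕ) (Y : Matrix (ι × κ) (ι × κ) ℂ) : Prop :=
  ∀ v : ι × κ → ℂ, vinner v v = 1 → SchmidtRankLE k v →
    0 ≤ (vinner v (Y.mulVec v)).re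

/-- Dual of a norm on matrices, w.r.t. the Hilbert–Schmidt inner product ⟨W,X⟩ = Tr(Wᴴ X). -/
noncomputable def dualNormM (f : Matrix ι κ ℂ → ℝ) (X : Matrix ι κ ℂ) : ℝ :=
  sSup { r | ∃ W : Matrix ι κ ℂ, f W ≤ 1 ∧ r = ‖(Wᴴ * X).trace‖ }

/-- Dual of a norm, computed in the real Hilbert space of Hermitian matrices with the
Hilbert–Schmidt inner product ⟨W,Y⟩ = Tr(WY). -/
noncomputable def dualNormHerm (f : Matrix ι ι ℂ → ℝ) (Y : Matrix ι ι ℂ) : ℝ :=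
  sSup { r | ∃ W : Matrix ι ι ℂ, W.IsHermitian ∧ f W ≤ 1 ∧ r = |((W * Y).trace).re| }

/-- The Frobenius norm of a matrix. -/
noncomputable def frobNorm (X : Matrix ι κ ℂ) : ℝ :=
  Real.sqrt (∑ i, ∑ j, Complex.normSq (X i j))

/-- The (k,2)-norm: ‖X‖_{(k,2)} = sup { |Tr(XY)| : rank Y ≤ k, ‖Y‖_F ≤ 1 }. -/
noncomputable def kNorm (k : ℕ) (X : Matrix ι κ ℂ) : ℝ :=
  sSup { r | ∃ Y : Matrix κ ι ℂ, Y.rank ≤ k ∧ frobNorm Y ≤ 1 ∧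
    r = ‖(X * Y).trace‖ }

/-- The trace norm: the sum of the singular values, i.e. of the square roots of the
eigenvalues of Xᴴ X. -/
noncomputable def traceNorm [DecidableEq κ] (X : Matrix ι κ ℂ) : ℝ :=
  ∑ i, Real.sqrt ((Matrix.isHermitian_conjTranspose_mul_self X).eigenvalues i)

/-- The s(k) vector norm: sup of |⟨u,w⟩| over unit vectors u of Schmidt rank at most k. -/
noncomputable def skVecNorm (k : ℕ) (w : ι × κ → ℂ) : ℝ :=
  sSup { r | ∃ u : ι × κ → ℂ, vinner u u = 1 ∧ SchmidtRankLE k u ∧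
    r = ‖vinner u w‖ }

/-- Dual of a norm on vectors. -/
noncomputable def dualNormV (f : (ι × κ → ℂ) → ℝ) (v : ι × κ → ℂ) : ℝ :=
  sSup { r | ∃ w : ι × κ → ℂ, f w ≤ 1 ∧ r = ‖vinner w v‖ }

/-- The realignment map, L(X)_{(i,k),(j,l)} = X_{(i,j),(k,l)}. -/
def realign {m n : ℕ} (X : Matrix (Fin m × Fin n) (Fin m × Fin n) ℂ) :
    Matrix (Fin m × Fin m) (Fin n × Fin n) ℂ :=
  fun p q => X (p.1, q.1) (p.2, q.2)

/-- The projective tensor norm on M_{m,n} ⊗ M_{m,n}. -/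
noncomputable def projNorm {m n : ℕ} (Z : Matrix (Fin m × Fin m) (Fin n × Fin n) ℂ) : ℝ :=
  sInf { r | ∃ (N : ℕ) (A B : Fin N → Matrix (Fin m) (Fin n) ℂ),
    Z = ∑ i, A i ⊗ₖ B i ∧ r = ∑ i, traceNorm (A i) * traceNorm (B i) }


/-- The swap operator S(a ⊗ b) = b ⊗ a on ℂ^m ⊗ ℂ^n (meaningful when m = n). -/
def swapMat (m n : ℕ) : Matrix (Fin m × Fin n) (Fin m × Fin n) ℂ :=
  fun p q => if (p.1 : ℕ) = (q.2 : ℕ) ∧ (p.2 : ℕ) = (q.1 : ℕ) then 1 else 0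

/-- A unitary of the form U₁ ⊗ U₂, or (when m = n) S(U₁ ⊗ U₂) with S the swap operator. -/
def IsLocalUnitary (m n : ℕ) (U : Matrix (Fin m × Fin n) (Fin m × Fin n) ℂ) : Prop :=
  (∃ U₁ ∈ Matrix.unitaryGroup (Fin m) ℂ, ∃ U₂ ∈ Matrix.unitaryGroup (Fin n) ℂ,
    U = U₁ ⊗ₖ U₂) ∨
  (m = n ∧ ∃ U₁ ∈ Matrix.unitaryGroup (Fin m) ℂ, ∃ U₂ ∈ Matrix.unitaryGroup (Fin n) ℂ,
    U = swapMat m n * (U₁ ⊗ₖ U₂))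

/-- The partial transpose map id_m ⊗ T. -/
def ptrans {m n : ℕ} (X : Matrix (Fin m × Fin n) (Fin m × Fin n) ℂ) :
    Matrix (Fin m × Fin n) (Fin m × Fin n) ℂ :=
  fun p q => X (p.1, q.2) (q.1, p.2)

/-- The generating maps: X ↦ UXV with U, V local unitaries; the transpose; and, when
k = 1 only, the partial transpose. -/
inductive IsIsoGen (m n k : ℕ) :
    (Matrix (Fin m × Fin n) (Fin m × Fin n) ℂ → Matrix (Fin m × Fin n) (Fin m × Fin n) ℂ) →
      Prop
  | unitary (U V : Matrix (Fin m × Fin n) (Fin m × Fin n) ℂ)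
      (hU : IsLocalUnitary m n U) (hV : IsLocalUnitary m n V) :
      IsIsoGen m n k (fun X => U * X * V)
  | transpose : IsIsoGen m n k (fun X => Xᵀ)
  | ptranspose (h : k = 1) : IsIsoGen m n k ptrans

/-- Compositions of one or more of the generating maps. -/
inductive IsIsoComp (m n k : ℕ) :
    (Matrix (Fin m × Fin n) (Fin m × Fin n) ℂ → Matrix (Fin m × Fin n) (Fin m × Fin n) ℂ) →
      Prop
  | base (f) (h : IsIsoGen m n k f) : IsIsoComp m n k f
  | comp (f g) (hf : IsIsoComp m n k f) (hg : IsIsoComp m n k g) : IsIsoComp m n k (f ∘ g)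

end Ent

namespace Ent

section SR
variable {I J : Type*}

theorem SR_of_eq {k : ℕ} {v w : I × J → ℂ} (h : v = w) (hv : SchmidtRankLE k v) :
    SchmidtRankLE k w := h ▸ hv

theorem SR_zero (k : ℕ) : SchmidtRankLE k (0 : I × J → ℂ) :=
  ⟨0, 0, by ext p; simp [prodVec]⟩

theorem SR_prod (a : I → ℂ) (b : J → ℂ) : SchmidtRankLE 1 (prodVec a b) :=
  ⟨fun _ => a, fun _ => b, by simp⟩

theorem SR_one_iff {v : I × J → ℂ} : SchmidtRankLE 1 v ↔ ∃ a b, v = prodVec a b := by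
  constructor
  · rintro ⟨a, b, h⟩
    exact ⟨a 0, b 0, by simpa using h⟩
  · rintro ⟨a, b, rfl⟩
    exact SR_prod a b

theorem SR_smul {k : ℕ} {v : I × J → ℂ} (c : ℂ) (hv : SchmidtRankLE k v) :
    SchmidtRankLE k (c • v) := by
  obtain ⟨a, b, rfl⟩ := hv
  refine ⟨fun i => c • a i, b, ?_⟩
  ext p
  simp [prodVec, Finset.mul_sum, mul_assoc]

theorem SR_star {k : ℕ} {v : I × J → ℂ} (hv : SchmidtRankLE k v) :
    SchmidtRankLE k (star v) := by
  obtain ⟨a, b, rfl⟩ := hv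
  refine ⟨fun i => star (a i), fun i => star (b i), ?_⟩
  ext p
  simp [prodVec]

theorem SR_add {j k : ℕ} {v w : I × J → ℂ} (hv : SchmidtRankLE j v) (hw : SchmidtRankLE k w) :
    SchmidtRankLE (j + k) (v + w) := by
  obtain ⟨a, b, rfl⟩ := hv
  obtain ⟨a', b', rfl⟩ := hw
  refine ⟨Fin.append a a', Fin.append b b', ?_⟩
  rw [Fin.sum_univ_add]
  simp

theorem SR_mono {j k : ℕ} (h : j ≤ k) {v : I × J → ℂ} (hv : SchmidtRankLE j v) :
    SchmidtRankLE k v := by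
  obtain ⟨l, rfl⟩ := Nat.exists_eq_add_of_le h
  simpa using SR_add hv (SR_zero l)

theorem SR_single [DecidableEq I] [DecidableEq J] {k : ℕ} (hk : 1 ≤ k) (p : I × J) :
    SchmidtRankLE k (Pi.single p (1 : ℂ)) := by
  refine SR_mono hk (SR_of_eq ?_ (SR_prod (Pi.single p.1 1) (Pi.single p.2 1)))
  ext q
  simp only [prodVec, Pi.single_apply, Prod.ext_iff]
  split_ifs <;> simp_all

/-- Schmidt rank through linear independence of columns. -/
theorem SR_iff [Fintype I] [Fintype J] {k : ℕ} {v : I × J → ℂ} :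
    SchmidtRankLE k v ↔
      ∀ s : Fin (k + 1) → J, ¬ LinearIndependent ℂ (fun i => fun p : I => v (p, s i)) := by
  classical
  constructor
  · rintro ⟨a, b, rfl⟩ s hs
    have hmem : ∀ i, (fun p : I => (∑ l, prodVec (a l) (b l)) (p, s i)) ∈
        Submodule.span ℂ (Set.range a) := by
      intro i
      have : (fun p : I => (∑ l, prodVec (a l) (b l)) (p, s i)) = ∑ l, b l (s i) • a l := by
        ext p
        simp [prodVec, mul_comm]
      rw [this]
      exact Submodule.sum_mem _ fun l _ =>
        Submodule.smul_mem _ _ (Submodule.subset_span ⟨l, rfl⟩)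
    have h2 : Module.finrank ℂ (Submodule.span ℂ (Set.range a)) ≤ k := by
      have := finrank_range_le_card (R := ℂ) a
      rwa [Fintype.card_fin] at this
    have h3 := finrank_span_eq_card hs
    have h4 : Submodule.span ℂ (Set.range fun i => fun p : I =>
        (∑ l, prodVec (a l) (b l)) (p, s i)) ≤ Submodule.span ℂ (Set.range a) := by
      rw [Submodule.span_le]
      rintro _ ⟨i, rfl⟩
      exact hmem i
    have h5 := Submodule.finrank_mono h4
    rw [h3] at h5
    simp at h5
    omega
  · intro h
    set col : J → I → ℂ := fun j p => v (p, j) with hcol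
    set W := Submodule.span ℂ (Set.range col) with hW
    have hr : Module.finrank ℂ W ≤ k := by
      by_contra hcon
      push Not at hcon
      obtain ⟨b, hb1, hb2, hb3⟩ := exists_linearIndependent ℂ (Set.range col)
      have hbf : b.Finite := (Set.finite_range col).subset hb1
      have : Fintype b := hbf.fintype
      have hc : Fintype.card b = Module.finrank ℂ W := by
        rw [hW, ← hb2]
        have := finrank_span_eq_card hb3
        rw [Subtype.range_coe] at this
        exact this.symm
      have hle : Fintype.card (Fin (k+1)) ≤ Fintype.card b := by
        rw [hc, Fintype.card_fin]; omega
      obtain ⟨f⟩ := Function.Embedding.nonempty_of_card_le hle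
      have hex : ∀ i : Fin (k+1), ∃ j, col j = (f i : I → ℂ) := fun i => hb1 (f i).2
      choose s hs using hex
      apply h s
      have h6 := hb3.comp f f.injective
      have h7 : (fun i => fun p : I => v (p, s i)) = (Subtype.val ∘ f) := by
        ext i p
        exact congrFun (hs i) p
      rw [h7]
      exact h6
    let B := Module.finBasis ℂ W
    refine SR_mono hr ⟨fun i => (B i : I → ℂ), fun i j =>
      B.repr ⟨col j, Submodule.subset_span ⟨j, rfl⟩⟩ i, ?_⟩
    ext ⟨p, j⟩
    have := B.sum_repr ⟨col j, Submodule.subset_span ⟨j, rfl⟩⟩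
    have h2 := congrFun (congrArg Subtype.val this) p
    simp only [Submodule.coe_sum, Submodule.coe_smul, Finset.sum_apply, Pi.smul_apply,
      smul_eq_mul] at h2
    simp only [Finset.sum_apply, prodVec]
    change col j p = _
    rw [← h2]
    exact Finset.sum_congr rfl fun i _ => mul_comm _ _

theorem SR_isClosed [Fintype I] [Fintype J] (k : ℕ) :
    IsClosed {v : I × J → ℂ | SchmidtRankLE k v} := by
  have : {v : I × J → ℂ | SchmidtRankLE k v} = ⋂ s : Fin (k+1) → J,
      {v | LinearIndependent ℂ (fun i => fun p : I => v (p, s i))}ᶜ := by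
    ext v
    simp [SR_iff]
  rw [this]
  refine isClosed_iInter fun s => ?_
  rw [isClosed_compl_iff]
  have h := isOpen_setOfPred_linearIndependent (𝕜 := ℂ) (E := I → ℂ) (ι := Fin (k+1))
  exact h.preimage (f := fun v : I × J → ℂ => fun i => fun p : I => v (p, s i)) (by fun_prop)

end SR


section HS
variable {A B : Type*} [Fintype A] [Fintype B]

/-- Hilbert-Schmidt inner product. -/
noncomputable def hs (Y X : Matrix A B ℂ) : ℂ := ∑ p, ∑ q, star (Y p q) * X p q

/-- squared norm of a vector -/
noncomputable def nsq (v : A → ℂ) : ℝ := ∑ i, Complex.normSq (v i)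

/-- squared Frobenius norm -/
noncomputable def nsqM (X : Matrix A B ℂ) : ℝ := ∑ p, ∑ q, Complex.normSq (X p q)

theorem vinner_self (v : A → ℂ) : vinner v v = (nsq v : ℂ) := by
  simp [vinner, nsq, dotProduct, Complex.normSq_eq_conj_mul_self]

theorem vinner_self_eq_one {v : A → ℂ} : vinner v v = 1 ↔ nsq v = 1 := by
  rw [vinner_self]; exact_mod_cast Iff.rfl

theorem hs_self (X : Matrix A B ℂ) : hs X X = (nsqM X : ℂ) := by
  simp [hs, nsqM, Complex.normSq_eq_conj_mul_self]

theorem hs_ketBra (v : A → ℂ) (w : B → ℂ) (X : Matrix A B ℂ) :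
    hs (ketBra v w) X = vinner v (X.mulVec w) := by
  simp only [hs, ketBra, vinner, dotProduct, mulVec, vecMulVec_apply, Pi.star_apply,
    Finset.mul_sum, star_mul', star_star]
  refine Finset.sum_congr rfl fun p _ => Finset.sum_congr rfl fun q _ => by ring

theorem hs_add_right (Y X X' : Matrix A B ℂ) : hs Y (X + X') = hs Y X + hs Y X' := by
  simp [hs, mul_add, Finset.sum_add_distrib]

theorem hs_smul_right (Y X : Matrix A B ℂ) (c : ℂ) : hs Y (c • X) = c * hs Y X := by
  simp only [hs, Matrix.smul_apply, smul_eq_mul, Finset.mul_sum]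
  refine Finset.sum_congr rfl fun p _ => Finset.sum_congr rfl fun q _ => by ring

theorem hs_add_left (Y Y' X : Matrix A B ℂ) : hs (Y + Y') X = hs Y X + hs Y' X := by
  simp [hs, add_mul, Finset.sum_add_distrib]

theorem hs_smul_left (Y X : Matrix A B ℂ) (c : ℂ) : hs (c • Y) X = star c * hs Y X := by
  simp only [hs, Matrix.smul_apply, smul_eq_mul, Finset.mul_sum, star_mul']
  refine Finset.sum_congr rfl fun p _ => Finset.sum_congr rfl fun q _ => by ring

theorem hs_sum_left {N : Type*} (s : Finset N) (Y : N → Matrix A B ℂ) (X : Matrix A B ℂ) :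
    hs (∑ i ∈ s, Y i) X = ∑ i ∈ s, hs (Y i) X := by
  classical
  induction s using Finset.induction_on with
  | empty => simp [hs]
  | insert i s hi ih => rw [Finset.sum_insert hi, Finset.sum_insert hi, hs_add_left, ih]

theorem hs_symm (Y X : Matrix A B ℂ) : hs X Y = star (hs Y X) := by
  simp only [hs, star_sum, star_mul', star_star]
  refine Finset.sum_congr rfl fun p _ => Finset.sum_congr rfl fun q _ => by ring

theorem nsqM_nonneg (X : Matrix A B ℂ) : 0 ≤ nsqM X :=
  Finset.sum_nonneg fun _ _ => Finset.sum_nonneg fun _ _ => Complex.normSq_nonneg _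

theorem nsq_nonneg (v : A → ℂ) : 0 ≤ nsq v :=
  Finset.sum_nonneg fun _ _ => Complex.normSq_nonneg _

theorem nsqM_eq_zero {X : Matrix A B ℂ} : nsqM X = 0 ↔ X = 0 := by
  constructor
  · intro h
    ext p q
    have h1 := (Finset.sum_eq_zero_iff_of_nonneg (fun p _ => Finset.sum_nonneg
      fun q _ => Complex.normSq_nonneg (X p q))).1 h p (Finset.mem_univ _)
    have h2 := (Finset.sum_eq_zero_iff_of_nonneg
      (fun q _ => Complex.normSq_nonneg (X p q))).1 h1 q (Finset.mem_univ _)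
    simpa using h2
  · rintro rfl
    simp [nsqM]

theorem nsq_eq_zero {v : A → ℂ} : nsq v = 0 ↔ v = 0 := by
  constructor
  · intro h
    ext p
    have h1 := (Finset.sum_eq_zero_iff_of_nonneg (fun p _ =>
      Complex.normSq_nonneg (v p))).1 h p (Finset.mem_univ _)
    simpa using h1
  · rintro rfl
    simp [nsq]

theorem nsq_smul (c : ℂ) (v : A → ℂ) : nsq (c • v) = Complex.normSq c * nsq v := by
  simp [nsq, Finset.mul_sum]

theorem nsq_star (v : A → ℂ) : nsq (star v) = nsq v := by
  simp [nsq]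

theorem nsqM_smul (c : ℂ) (X : Matrix A B ℂ) : nsqM (c • X) = Complex.normSq c * nsqM X := by
  simp [nsqM, Finset.mul_sum]

theorem nsqM_vecMulVec (v : A → ℂ) (w : B → ℂ) : nsqM (vecMulVec v w) = nsq v * nsq w := by
  simp [nsqM, nsq, vecMulVec_apply, Finset.sum_mul_sum]

theorem nsqM_sub_smul (X g : Matrix A B ℂ) (c : ℂ) :
    nsqM (X - c • g) = nsqM X - 2 * (c * star (hs g X)).re + Complex.normSq c * nsqM g := by
  have h1 : ((nsqM (X - c • g) : ℝ) : ℂ) = hs X X - c * star (hs g X) - star c * hs g X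
      + c * star c * hs g g := by
    rw [← hs_self, show X - c • g = X + (-c) • g by simp [sub_eq_add_neg], hs_add_right,
      hs_add_left, hs_add_left, hs_smul_right, hs_smul_left, hs_smul_right, hs_smul_left,
      hs_symm g X]
    simp only [star_neg]
    ring
  have h2 := congrArg Complex.re h1
  rw [hs_self, hs_self] at h2
  simp only [Complex.ofReal_re, Complex.add_re, Complex.sub_re, Complex.mul_re,
    Complex.ofReal_im] at h2
  rw [h2]
  simp [Complex.normSq_apply]
  ring

theorem hs_sq_le {g : Matrix A B ℂ} (hg : nsqM g = 1) (X : Matrix A B ℂ) :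
    ‖hs g X‖ ^ 2 ≤ nsqM X := by
  have h := nsqM_nonneg (X - (hs g X) • g)
  rw [nsqM_sub_smul, hg] at h
  have : (hs g X * star (hs g X)).re = Complex.normSq (hs g X) := by
    simp [Complex.normSq_apply]
  rw [this] at h
  rw [← Complex.normSq_eq_norm_sq]
  linarith

theorem hs_eq_one {g h : Matrix A B ℂ} (hg : nsqM g = 1) (hh : nsqM h ≤ 1) (hgh : hs h g = 1) :
    h = g := by
  have h1 := nsqM_sub_smul h g 1
  have h2 : hs g h = 1 := by rw [hs_symm, hgh]; simp
  rw [h2] at h1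
  simp [hg] at h1
  have h3 := nsqM_nonneg (h - g)
  have h4 : nsqM (h - g) = 0 := by linarith
  exact sub_eq_zero.1 (nsqM_eq_zero.1 h4)

theorem hs_ext_left {Y Y' : Matrix A B ℂ} (h : ∀ X, hs Y X = hs Y' X) : Y = Y' := by
  have h1 : hs (Y - Y') (Y - Y') = 0 := by
    rw [show Y - Y' = Y + (-1 : ℂ) • Y' by simp [sub_eq_add_neg], hs_add_left, hs_smul_left, h]
    simp
  rw [hs_self] at h1
  exact sub_eq_zero.1 (nsqM_eq_zero.1 (by exact_mod_cast h1))

/-- adjoint with respect to `hs`. -/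
noncomputable def hsAdj [DecidableEq A] [DecidableEq B] (Φ : Matrix A B ℂ →ₗ[ℂ] Matrix A B ℂ) :
    Matrix A B ℂ →ₗ[ℂ] Matrix A B ℂ where
  toFun X := Matrix.of fun p q => hs (Φ (Matrix.single p q 1)) X
  map_add' X Y := by ext p q; simp [hs_add_right]
  map_smul' c X := by ext p q; simp [hs_smul_right]

theorem hs_hsAdj [DecidableEq A] [DecidableEq B] (Φ : Matrix A B ℂ →ₗ[ℂ] Matrix A B ℂ)
    (X Y : Matrix A B ℂ) : hs (Φ Y) X = hs Y (hsAdj Φ X) := by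
  conv_lhs => rw [Matrix.matrix_eq_sum_single Y]
  rw [map_sum, hs_sum_left, hs]
  refine Finset.sum_congr rfl fun p _ => ?_
  rw [map_sum, hs_sum_left]
  refine Finset.sum_congr rfl fun q _ => ?_
  have : Matrix.single p q (Y p q) = (Y p q) • Matrix.single p q (1 : ℂ) := by
    simp
  rw [this, map_smul, hs_smul_left]
  rfl

theorem hs_hsAdj' [DecidableEq A] [DecidableEq B] (Φ : Matrix A B ℂ →ₗ[ℂ] Matrix A B ℂ)
    (X Y : Matrix A B ℂ) : hs (hsAdj Φ Y) X = hs Y (Φ X) := by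
  rw [hs_symm, ← hs_hsAdj, ← hs_symm]

end HS

section Gset
variable {I J : Type*} [Fintype I] [Fintype J]

/-- normalized rank one operators built from vectors of Schmidt rank at most `k`. -/
def Gset (I J : Type*) [Fintype I] [Fintype J] (k : ℕ) : Set (Matrix (I × J) (I × J) ℂ) :=
  {X | ∃ v w, vinner v v = 1 ∧ vinner w w = 1 ∧ SchmidtRankLE k v ∧ SchmidtRankLE k w ∧
    X = ketBra v w}

theorem Gset_nsq {k : ℕ} {g : Matrix (I × J) (I × J) ℂ} (hg : g ∈ Gset I J k) : nsqM g = 1 := by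
  obtain ⟨v, w, hv, hw, -, -, rfl⟩ := hg
  rw [ketBra, nsqM_vecMulVec, nsq_star, vinner_self_eq_one.1 hv, vinner_self_eq_one.1 hw, one_mul]

theorem SkNorm_eq (k : ℕ) (X : Matrix (I × J) (I × J) ℂ) :
    SkNorm k X = sSup {r | ∃ g ∈ Gset I J k, r = ‖hs g X‖} := by
  unfold SkNorm
  congr 1
  ext r
  constructor
  · rintro ⟨v, w, h1, h2, h3, h4, rfl⟩
    exact ⟨_, ⟨v, w, h1, h2, h3, h4, rfl⟩, by rw [hs_ketBra]⟩
  · rintro ⟨_, ⟨v, w, h1, h2, h3, h4, rfl⟩, rfl⟩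
    exact ⟨v, w, h1, h2, h3, h4, by rw [hs_ketBra]⟩

theorem hs_le_SkNorm {k : ℕ} {g : Matrix (I × J) (I × J) ℂ} (hg : g ∈ Gset I J k)
    (X : Matrix (I × J) (I × J) ℂ) : ‖hs g X‖ ≤ SkNorm k X := by
  rw [SkNorm_eq]
  refine le_csSup ⟨Real.sqrt (nsqM X), ?_⟩ ⟨g, hg, rfl⟩
  rintro _ ⟨g', hg', rfl⟩
  exact Real.le_sqrt_of_sq_le (hs_sq_le (Gset_nsq hg') X)

theorem unitSR_isCompact (k : ℕ) :
    IsCompact {v : I × J → ℂ | vinner v v = 1 ∧ SchmidtRankLE k v} := by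
  refine Metric.isCompact_of_isClosed_isBounded ?_ ?_
  · refine IsClosed.inter ?_ (SR_isClosed k)
    refine isClosed_eq ?_ continuous_const
    unfold vinner dotProduct
    simp only [Pi.star_apply]
    fun_prop
  · refine (Metric.isBounded_closedBall (x := (0 : I × J → ℂ)) (r := 1)).subset ?_
    rintro v ⟨hv, -⟩
    rw [mem_closedBall_zero_iff, pi_norm_le_iff_of_nonneg zero_le_one]
    intro i
    have h1 := vinner_self_eq_one.1 hv
    have h2 : Complex.normSq (v i) ≤ nsq v :=
      Finset.single_le_sum (f := fun i => Complex.normSq (v i))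
        (fun j _ => Complex.normSq_nonneg _) (Finset.mem_univ i)
    rw [h1, Complex.normSq_eq_norm_sq] at h2
    exact (sq_le_one_iff₀ (norm_nonneg _)).1 h2

theorem vinner_single [DecidableEq I] [DecidableEq J] (p : I × J) :
    vinner (Pi.single p (1 : ℂ)) (Pi.single p (1 : ℂ)) = 1 := by
  rw [vinner, dotProduct_single]
  simp

theorem single_mem_Gset [DecidableEq I] [DecidableEq J] {k : ℕ} (hk : 1 ≤ k) (p q : I × J) :
    ketBra (Pi.single p 1) (Pi.single q 1) ∈ Gset I J k :=
  ⟨_, _, vinner_single p, vinner_single q, SR_single hk p, SR_single hk q, rfl⟩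

theorem ketBra_single [DecidableEq I] [DecidableEq J] (p q : I × J) :
    ketBra (Pi.single p (1 : ℂ)) (Pi.single q (1 : ℂ)) = Matrix.single p q 1 := by
  rw [ketBra]
  have : star (Pi.single q (1 : ℂ) : I × J → ℂ) = Pi.single q 1 := by
    ext i; by_cases h : i = q
    · subst h; simp
    · simp [Pi.single_eq_of_ne h]
  rw [this, Matrix.single_eq_single_vecMulVec_single]

theorem SkNorm_att [Nonempty I] [Nonempty J] {k : ℕ} (hk : 1 ≤ k)
    (X : Matrix (I × J) (I × J) ℂ) : ∃ g ∈ Gset I J k, SkNorm k X = ‖hs g X‖ := by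
  classical
  obtain ⟨p⟩ : Nonempty (I × J) := inferInstance
  have hc := (unitSR_isCompact (I := I) (J := J) k).prod (unitSR_isCompact (I := I) (J := J) k)
  have hcont : ContinuousOn (fun z : (I × J → ℂ) × (I × J → ℂ) => ‖vinner z.1 (X.mulVec z.2)‖)
      ({v | vinner v v = 1 ∧ SchmidtRankLE k v} ×ˢ {v | vinner v v = 1 ∧ SchmidtRankLE k v}) := by
    apply Continuous.continuousOn
    unfold vinner dotProduct mulVec dotProduct
    simp only [Pi.star_apply]
    fun_prop
  obtain ⟨⟨v, w⟩, ⟨⟨hv1, hv2⟩, hw1, hw2⟩, hmax⟩ := hc.exists_isMaxOn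
    ⟨(Pi.single p 1, Pi.single p 1), ⟨vinner_single p, SR_single hk p⟩,
      vinner_single p, SR_single hk p⟩ hcont
  refine ⟨ketBra v w, ⟨v, w, hv1, hw1, hv2, hw2, rfl⟩, le_antisymm ?_ ?_⟩
  · rw [SkNorm_eq]
    refine csSup_le ⟨_, _, ⟨v, w, hv1, hw1, hv2, hw2, rfl⟩, rfl⟩ ?_
    rintro _ ⟨_, ⟨v', w', h1, h2, h3, h4, rfl⟩, rfl⟩
    rw [hs_ketBra, hs_ketBra]
    exact hmax (show (v', w') ∈ _ from ⟨⟨h1, h3⟩, h2, h4⟩)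
  · exact hs_le_SkNorm ⟨v, w, hv1, hw1, hv2, hw2, rfl⟩ X

theorem Gset_smul {k : ℕ} {g : Matrix (I × J) (I × J) ℂ} (hg : g ∈ Gset I J k) {c : ℂ}
    (hc : Complex.normSq c = 1) : c • g ∈ Gset I J k := by
  obtain ⟨v, w, h1, h2, h3, h4, rfl⟩ := hg
  refine ⟨c • v, w, ?_, h2, SR_smul c h3, h4, ?_⟩
  · rw [vinner_self_eq_one, nsq_smul, hc, vinner_self_eq_one.1 h1, one_mul]
  · ext p q
    simp [ketBra, vecMulVec_apply, mul_assoc]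

theorem ketBra_mem_Gset {k : ℕ} {v w : I × J → ℂ} (hv : SchmidtRankLE k v)
    (hw : SchmidtRankLE k w) (h : nsq v * nsq w = 1) : ketBra v w ∈ Gset I J k := by
  have h0 : nsq v ≠ 0 := fun h0 => by rw [h0] at h; simp at h
  have hpos : 0 < nsq v := lt_of_le_of_ne (nsq_nonneg v) (Ne.symm h0)
  set t : ℝ := Real.sqrt (nsq v) with ht
  have ht0 : 0 < t := Real.sqrt_pos.2 hpos
  have htt : t * t = nsq v := Real.mul_self_sqrt hpos.le
  have htc : (t : ℂ) ≠ 0 := by exact_mod_cast ht0.ne'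
  refine ⟨((t⁻¹ : ℝ) : ℂ) • v, (t : ℂ) • w, ?_, ?_, SR_smul _ hv, SR_smul _ hw, ?_⟩
  · rw [vinner_self_eq_one, nsq_smul, Complex.normSq_ofReal, ← htt]
    field_simp
  · rw [vinner_self_eq_one, nsq_smul, Complex.normSq_ofReal, htt, h]
  · ext p q
    simp only [ketBra, vecMulVec_apply, Pi.smul_apply, Pi.star_apply, smul_eq_mul, star_mul',
      Complex.star_def, Complex.conj_ofReal, Complex.ofReal_inv]
    field_simp

/-- Adjoint of an isometry of the `S(k)`-norm preserves `Gset`. -/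
theorem adj_mem_Gset [Nonempty I] [Nonempty J] {k : ℕ} (hk : 1 ≤ k)
    (Φi Ψ Ψi : Matrix (I × J) (I × J) ℂ →ₗ[ℂ] Matrix (I × J) (I × J) ℂ)
    (hiso : ∀ X, SkNorm k (Φi X) = SkNorm k X)
    (hadj : ∀ X Y, hs (Ψi Y) X = hs Y (Φi X))
    (hinv : ∀ X, Ψ (Ψi X) = X)
    {g : Matrix (I × J) (I × J) ℂ} (hg : g ∈ Gset I J k) : Ψ g ∈ Gset I J k := by
  have hS1 : ∀ X : Matrix (I × J) (I × J) ℂ, SkNorm k X ^ 2 ≤ nsqM X := by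
    intro X
    obtain ⟨g', hg', h⟩ := SkNorm_att hk X
    rw [h]
    exact hs_sq_le (Gset_nsq hg') X
  have hSg : SkNorm k g = 1 := by
    apply le_antisymm
    · have := hS1 g
      rw [Gset_nsq hg] at this
      have h0 : 0 ≤ SkNorm k g := (norm_nonneg _).trans (hs_le_SkNorm hg g)
      exact (sq_le_one_iff₀ h0).1 this
    · have := hs_le_SkNorm hg g
      rw [hs_self, Gset_nsq hg] at this
      simpa using this
  obtain ⟨g₀, hg₀, h₀⟩ := SkNorm_att hk (Φi g)
  rw [hiso, hSg] at h₀
  set z := hs g₀ (Φi g) with hz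
  have hz1 : Complex.normSq z = 1 := by
    rw [Complex.normSq_eq_norm_sq, ← h₀]; norm_num
  have hg' : z • g₀ ∈ Gset I J k := Gset_smul hg₀ hz1
  have hone : hs (z • g₀) (Φi g) = 1 := by
    rw [hs_smul_left, ← hz]
    have := Complex.normSq_eq_conj_mul_self (z := z)
    rw [hz1] at this
    simpa using this.symm
  generalize z • g₀ = g' at hg' hone
  have hn : nsqM (Ψi g') ≤ 1 := by
    have h1 : hs (Ψi g') (Ψi g') = hs g' (Φi (Ψi g')) := hadj _ _
    have h2 := hs_le_SkNorm hg' (Φi (Ψi g'))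
    rw [← h1, hiso, hs_self] at h2
    have h3 := hS1 (Ψi g')
    have h4 := nsqM_nonneg (Ψi g')
    simp only [Complex.norm_real, Real.norm_eq_abs, abs_of_nonneg h4] at h2
    by_contra hcon
    push Not at hcon
    nlinarith
  have := hs_eq_one (Gset_nsq hg) hn (by rw [hadj, hone])
  rw [← this, hinv]
  exact hg'

end Gset


section Gam
variable {I J : Type*} [Fintype I] [Fintype J]

theorem SkNorm_nonneg (k : ℕ) (X : Matrix (I × J) (I × J) ℂ) : 0 ≤ SkNorm k X := by
  rw [SkNorm_eq]
  apply Real.sSup_nonneg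
  rintro _ ⟨g, -, rfl⟩
  exact norm_nonneg _

/-- the set in the definition of the gamma norm -/
def gamSet (k : ℕ) (X : Matrix (I × J) (I × J) ℂ) : Set ℝ :=
  {r | ∃ (N : ℕ) (c : Fin N → ℂ) (g : Fin N → Matrix (I × J) (I × J) ℂ),
    (∀ i, g i ∈ Gset I J k) ∧ X = ∑ i, c i • g i ∧ r = ∑ i, ‖c i‖}

theorem gammaNorm_eq (k : ℕ) (X : Matrix (I × J) (I × J) ℂ) :
    gammaNorm k X = sInf (gamSet k X) := by
  unfold gammaNorm gamSet
  congr 1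
  ext r
  constructor
  · rintro ⟨N, c, v, w, h1, h2, h3⟩
    exact ⟨N, c, fun i => ketBra (v i) (w i), fun i =>
      ⟨v i, w i, (h1 i).1, (h1 i).2.1, (h1 i).2.2.1, (h1 i).2.2.2, rfl⟩, h2, h3⟩
  · rintro ⟨N, c, g, h1, h2, h3⟩
    choose v w a1 a2 a3 a4 a5 using h1
    refine ⟨N, c, v, w, fun i => ⟨a1 i, a2 i, a3 i, a4 i⟩, ?_, h3⟩
    rw [h2]
    exact Finset.sum_congr rfl fun i _ => by rw [a5 i]

theorem gamSet_nonneg {k : ℕ} {X : Matrix (I × J) (I × J) ℂ} {r : ℝ} (hr : r ∈ gamSet k X) :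
    0 ≤ r := by
  obtain ⟨N, c, g, h1, h2, rfl⟩ := hr
  exact Finset.sum_nonneg fun _ _ => norm_nonneg _

theorem gamSet_bdd (k : ℕ) (X : Matrix (I × J) (I × J) ℂ) : BddBelow (gamSet k X) :=
  ⟨0, fun _ hr => gamSet_nonneg hr⟩

theorem gamSet_nonempty {k : ℕ} (hk : 1 ≤ k) (X : Matrix (I × J) (I × J) ℂ) :
    (gamSet k X).Nonempty := by
  classical
  let e := Fintype.equivFin ((I × J) × (I × J))
  refine ⟨_, Fintype.card ((I × J) × (I × J)), fun i => X (e.symm i).1 (e.symm i).2,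
    fun i => ketBra (Pi.single (e.symm i).1 1) (Pi.single (e.symm i).2 1),
    fun i => single_mem_Gset hk _ _, ?_, rfl⟩
  rw [e.symm.sum_comp (fun z => X z.1 z.2 • ketBra (Pi.single z.1 (1 : ℂ)) (Pi.single z.2 (1 : ℂ)))]
  rw [Fintype.sum_prod_type]
  conv_lhs => rw [Matrix.matrix_eq_sum_single X]
  refine Finset.sum_congr rfl fun p _ => Finset.sum_congr rfl fun q _ => ?_
  rw [ketBra_single]
  simp

theorem gammaNorm_pair {k : ℕ} (hk : 1 ≤ k) (X Y : Matrix (I × J) (I × J) ℂ) :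
    ‖hs X Y‖ ≤ gammaNorm k X * SkNorm k Y := by
  have h : ∀ r ∈ gamSet k X, ‖hs X Y‖ ≤ r * SkNorm k Y := by
    rintro _ ⟨N, c, g, h1, h2, rfl⟩
    rw [h2, hs_sum_left, Finset.sum_mul]
    refine (norm_sum_le _ _).trans (Finset.sum_le_sum fun i _ => ?_)
    rw [hs_smul_left, norm_mul, norm_star]
    exact mul_le_mul_of_nonneg_left (hs_le_SkNorm (h1 i) Y) (norm_nonneg _)
  obtain ⟨r₀, hr₀⟩ := gamSet_nonempty hk X
  rcases (SkNorm_nonneg k Y).eq_or_lt with h0 | h0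
  · have := h r₀ hr₀
    rw [← h0] at this ⊢
    simpa using this
  · rw [← div_le_iff₀ h0, gammaNorm_eq]
    exact le_csInf ⟨r₀, hr₀⟩ fun r hr => (div_le_iff₀ h0).2 (h r hr)

theorem gammaNorm_le_one {k : ℕ} {g : Matrix (I × J) (I × J) ℂ} (hg : g ∈ Gset I J k) :
    gammaNorm k g ≤ 1 := by
  rw [gammaNorm_eq]
  exact csInf_le (gamSet_bdd _ _) ⟨1, fun _ => 1, fun _ => g, fun _ => hg, by simp, by simp⟩

theorem gammaNorm_map_le {k : ℕ} (hk : 1 ≤ k)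
    (F : Matrix (I × J) (I × J) ℂ →ₗ[ℂ] Matrix (I × J) (I × J) ℂ)
    (hF : ∀ g ∈ Gset I J k, F g ∈ Gset I J k) (X : Matrix (I × J) (I × J) ℂ) :
    gammaNorm k (F X) ≤ gammaNorm k X := by
  rw [gammaNorm_eq, gammaNorm_eq]
  refine csInf_le_csInf (gamSet_bdd _ _) (gamSet_nonempty hk X) ?_
  rintro _ ⟨N, c, g, h1, h2, rfl⟩
  refine ⟨N, c, fun i => F (g i), fun i => hF _ (h1 i), ?_, rfl⟩
  rw [h2, map_sum]
  simp

theorem SkNorm_map_le [Nonempty I] [Nonempty J] {k : ℕ} (hk : 1 ≤ k)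
    (F F' : Matrix (I × J) (I × J) ℂ → Matrix (I × J) (I × J) ℂ)
    (hadj : ∀ X Y, hs (F' Y) X = hs Y (F X))
    (hF : ∀ g ∈ Gset I J k, F' g ∈ Gset I J k) (X : Matrix (I × J) (I × J) ℂ) :
    SkNorm k (F X) ≤ SkNorm k X := by
  obtain ⟨g, hg, h⟩ := SkNorm_att hk (F X)
  rw [h, ← hadj]
  exact hs_le_SkNorm (hF g hg) X

theorem SkNorm_adj_le [Nonempty I] [Nonempty J] {k : ℕ} (hk : 1 ≤ k)
    (F F' : Matrix (I × J) (I × J) ℂ → Matrix (I × J) (I × J) ℂ)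
    (hadj : ∀ X Y, hs (F Y) X = hs Y (F' X))
    (hF : ∀ X, gammaNorm k (F X) = gammaNorm k X) (X : Matrix (I × J) (I × J) ℂ) :
    SkNorm k (F' X) ≤ SkNorm k X := by
  obtain ⟨g, hg, h⟩ := SkNorm_att hk (F' X)
  rw [h, ← hadj]
  refine (gammaNorm_pair hk _ _).trans ?_
  rw [hF]
  exact mul_le_of_le_one_left (SkNorm_nonneg k X) (gammaNorm_le_one hg)

theorem eq_zero_of_SkNorm {k : ℕ} (hk : 1 ≤ k) {X : Matrix (I × J) (I × J) ℂ}
    (h : SkNorm k X = 0) : X = 0 := by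
  have h1 := gammaNorm_pair hk X X
  rw [h, mul_zero, hs_self] at h1
  have h2 := norm_le_zero_iff.1 h1
  exact nsqM_eq_zero.1 (by exact_mod_cast h2)

theorem eq_zero_of_gammaNorm {k : ℕ} (hk : 1 ≤ k) {X : Matrix (I × J) (I × J) ℂ}
    (h : gammaNorm k X = 0) : X = 0 := by
  have h1 := gammaNorm_pair hk X X
  rw [h, zero_mul, hs_self] at h1
  have h2 := norm_le_zero_iff.1 h1
  exact nsqM_eq_zero.1 (by exact_mod_cast h2)

end Gam

section Iso

theorem swapMat_mulVec {m : ℕ} (v : Fin m × Fin m → ℂ) :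
    swapMat m m *ᵥ v = fun p => v (p.2, p.1) := by
  ext p
  rw [mulVec, dotProduct, Finset.sum_eq_single (p.2, p.1)]
  · simp [swapMat]
  · rintro q - hq
    have : ¬ ((p.1 : ℕ) = (q.2 : ℕ) ∧ (p.2 : ℕ) = (q.1 : ℕ)) := by
      rintro ⟨h1, h2⟩
      exact hq (Prod.ext (Fin.ext h2.symm) (Fin.ext h1.symm))
    simp [swapMat, this]
  · simp

theorem swapMat_conjTranspose (m : ℕ) : (swapMat m m)ᴴ = swapMat m m := by
  ext p q
  simp only [conjTranspose_apply, swapMat]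
  by_cases h : (q.1 : ℕ) = p.2 ∧ (q.2 : ℕ) = p.1
  · rw [if_pos h, if_pos ⟨h.2.symm, h.1.symm⟩]; simp
  · rw [if_neg h, if_neg (fun h' => h ⟨h'.2.symm, h'.1.symm⟩)]; simp

theorem swapMat_transpose (m : ℕ) : (swapMat m m)ᵀ = swapMat m m := by
  ext p q
  simp only [transpose_apply, swapMat]
  by_cases h : (q.1 : ℕ) = p.2 ∧ (q.2 : ℕ) = p.1
  · rw [if_pos h, if_pos ⟨h.2.symm, h.1.symm⟩]
  · rw [if_neg h, if_neg (fun h' => h ⟨h'.2.symm, h'.1.symm⟩)]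

theorem swapMat_mul {m : ℕ} (X : Matrix (Fin m × Fin m) (Fin m × Fin m) ℂ) :
    swapMat m m * X = fun p q => X (p.2, p.1) q := by
  ext p q
  have := congrFun (swapMat_mulVec (fun r => X r q)) p
  exact this

theorem mul_swapMat {m : ℕ} (X : Matrix (Fin m × Fin m) (Fin m × Fin m) ℂ) :
    X * swapMat m m = fun p q => X p (q.2, q.1) := by
  have h : (X * swapMat m m)ᵀ = (fun p q => X p (q.2, q.1) : Matrix _ _ ℂ)ᵀ := by
    rw [transpose_mul, swapMat_transpose, swapMat_mul]
    rfl
  exact transpose_injective h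

theorem swapMat_mul_self (m : ℕ) : swapMat m m * swapMat m m = 1 := by
  rw [swapMat_mul]
  ext p q
  simp only [swapMat, Matrix.one_apply]
  by_cases h : p = q
  · subst h; simp
  · rw [if_neg h, if_neg]
    rintro ⟨h1, h2⟩
    exact h (Prod.ext (Fin.ext h2) (Fin.ext h1))

theorem swapMat_kron {m : ℕ} (A B : Matrix (Fin m) (Fin m) ℂ) :
    (A ⊗ₖ B) * swapMat m m = swapMat m m * (B ⊗ₖ A) := by
  rw [mul_swapMat, swapMat_mul]
  ext p q
  simp [kroneckerMap_apply, mul_comm]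

theorem IsLocalUnitary.conjTranspose {m n : ℕ} {U : Matrix (Fin m × Fin n) (Fin m × Fin n) ℂ}
    (h : IsLocalUnitary m n U) : IsLocalUnitary m n Uᴴ := by
  rcases h with ⟨A, hA, B, hB, rfl⟩ | ⟨rfl, A, hA, B, hB, rfl⟩
  · exact Or.inl ⟨Aᴴ, Unitary.star_mem hA, Bᴴ, Unitary.star_mem hB,
      by rw [conjTranspose_kronecker]⟩
  · refine Or.inr ⟨rfl, Bᴴ, Unitary.star_mem hB, Aᴴ, Unitary.star_mem hA, ?_⟩
    rw [conjTranspose_mul, conjTranspose_kronecker, swapMat_conjTranspose, swapMat_kron]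

theorem transpose_mem_unitary {m : ℕ} {A : Matrix (Fin m) (Fin m) ℂ}
    (hA : A ∈ unitaryGroup (Fin m) ℂ) : Aᵀ ∈ unitaryGroup (Fin m) ℂ := by
  rw [mem_unitaryGroup_iff'] at hA
  rw [mem_unitaryGroup_iff]
  have := congrArg Matrix.transpose hA
  rw [transpose_mul, transpose_one] at this
  exact this

theorem IsLocalUnitary.transpose {m n : ℕ} {U : Matrix (Fin m × Fin n) (Fin m × Fin n) ℂ}
    (h : IsLocalUnitary m n U) : IsLocalUnitary m n Uᵀ := by
  rcases h with ⟨A, hA, B, hB, rfl⟩ | ⟨rfl, A, hA, B, hB, rfl⟩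
  · exact Or.inl ⟨Aᵀ, transpose_mem_unitary hA, Bᵀ, transpose_mem_unitary hB,
      by rw [kroneckerMap_transpose]⟩
  · refine Or.inr ⟨rfl, Bᵀ, transpose_mem_unitary hB, Aᵀ, transpose_mem_unitary hA, ?_⟩
    rw [transpose_mul, ← kroneckerMap_transpose, swapMat_transpose, swapMat_kron]

theorem IsLocalUnitary.one (m n : ℕ) : IsLocalUnitary m n 1 :=
  Or.inl ⟨1, one_mem _, 1, one_mem _, by simp⟩

theorem IsLocalUnitary.swap (m : ℕ) : IsLocalUnitary m m (swapMat m m) :=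
  Or.inr ⟨rfl, 1, one_mem _, 1, one_mem _, by simp⟩

theorem IsLocalUnitary.mul_self {m n : ℕ} {U : Matrix (Fin m × Fin n) (Fin m × Fin n) ℂ}
    (h : IsLocalUnitary m n U) : Uᴴ * U = 1 := by
  have key : ∀ (a b : ℕ) (A : Matrix (Fin a) (Fin a) ℂ) (B : Matrix (Fin b) (Fin b) ℂ),
      A ∈ unitaryGroup (Fin a) ℂ → B ∈ unitaryGroup (Fin b) ℂ →
      (A ⊗ₖ B)ᴴ * (A ⊗ₖ B) = 1 := by
    intro a b A B hA hB
    rw [conjTranspose_kronecker, ← mul_kronecker_mul]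
    rw [mem_unitaryGroup_iff', star_eq_conjTranspose] at hA hB
    rw [hA, hB, one_kronecker_one]
  rcases h with ⟨A, hA, B, hB, rfl⟩ | ⟨rfl, A, hA, B, hB, rfl⟩
  · exact key _ _ _ _ hA hB
  · rw [conjTranspose_mul, swapMat_conjTranspose, Matrix.mul_assoc,
      ← Matrix.mul_assoc (swapMat m m), swapMat_mul_self, Matrix.one_mul]
    exact key _ _ _ _ hA hB

theorem IsLocalUnitary.self_mul {m n : ℕ} {U : Matrix (Fin m × Fin n) (Fin m × Fin n) ℂ}
    (h : IsLocalUnitary m n U) : U * Uᴴ = 1 := by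
  simpa using h.conjTranspose.mul_self

theorem kron_mulVec_prodVec {m n : ℕ} (A : Matrix (Fin m) (Fin m) ℂ) (B : Matrix (Fin n) (Fin n) ℂ)
    (a : Fin m → ℂ) (b : Fin n → ℂ) :
    (A ⊗ₖ B) *ᵥ prodVec a b = prodVec (A *ᵥ a) (B *ᵥ b) := by
  ext p
  simp only [mulVec, dotProduct, prodVec, kroneckerMap_apply, Fintype.sum_prod_type,
    Finset.sum_mul_sum]
  refine Finset.sum_congr rfl fun i _ => Finset.sum_congr rfl fun j _ => by ring

theorem swap_mulVec_prodVec {m : ℕ} (a : Fin m → ℂ) (b : Fin m → ℂ) :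
    swapMat m m *ᵥ prodVec a b = prodVec b a := by
  rw [swapMat_mulVec]
  ext p
  simp [prodVec, mul_comm]

theorem IsLocalUnitary.SR {m n : ℕ} {U : Matrix (Fin m × Fin n) (Fin m × Fin n) ℂ}
    (h : IsLocalUnitary m n U) {k : ℕ} {v : Fin m × Fin n → ℂ} (hv : SchmidtRankLE k v) :
    SchmidtRankLE k (U *ᵥ v) := by
  obtain ⟨a, b, rfl⟩ := hv
  rcases h with ⟨A, hA, B, hB, rfl⟩ | ⟨rfl, A, hA, B, hB, rfl⟩
  · refine ⟨fun i => A *ᵥ a i, fun i => B *ᵥ b i, ?_⟩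
    rw [mulVec_sum]
    exact Finset.sum_congr rfl fun i _ => kron_mulVec_prodVec A B _ _
  · refine ⟨fun i => B *ᵥ b i, fun i => A *ᵥ a i, ?_⟩
    rw [mulVec_sum]
    refine Finset.sum_congr rfl fun i _ => ?_
    rw [← mulVec_mulVec, kron_mulVec_prodVec, swap_mulVec_prodVec]

theorem vinner_unitary {A : Type*} [Fintype A] [DecidableEq A] {U : Matrix A A ℂ} (h : Uᴴ * U = 1)
    (v : A → ℂ) : vinner (U *ᵥ v) (U *ᵥ v) = vinner v v := by
  rw [vinner, star_mulVec, ← dotProduct_mulVec, mulVec_mulVec, h, one_mulVec, vinner]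

theorem mul_ketBra_mul {A : Type*} [Fintype A] (U V : Matrix A A ℂ) (v w : A → ℂ) :
    U * ketBra v w * V = ketBra (U *ᵥ v) (Vᴴ *ᵥ w) := by
  rw [ketBra, ketBra, mul_vecMulVec, vecMulVec_mul, star_mulVec, conjTranspose_conjTranspose]

theorem hs_eq_trace {A : Type*} [Fintype A] (Y X : Matrix A A ℂ) : hs Y X = (Yᴴ * X).trace := by
  simp only [hs, trace, diag, mul_apply, conjTranspose_apply]
  rw [Finset.sum_comm]

/-- Every composition of generating maps is linear, bijective, unitary for `hs`, and
preserves `Gset`. -/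
theorem IsIsoComp.props {m n k : ℕ}
    {f : Matrix (Fin m × Fin n) (Fin m × Fin n) ℂ → Matrix (Fin m × Fin n) (Fin m × Fin n) ℂ}
    (hf : IsIsoComp m n k f) :
    ∃ (F F' : Matrix (Fin m × Fin n) (Fin m × Fin n) ℂ →ₗ[ℂ]
        Matrix (Fin m × Fin n) (Fin m × Fin n) ℂ),
      ⇑F = f ∧ IsIsoComp m n k F' ∧ (∀ X, F (F' X) = X) ∧ (∀ X, F' (F X) = X) ∧
      (∀ X Y, hs (F Y) X = hs Y (F' X)) ∧
      (∀ g ∈ Gset (Fin m) (Fin n) k, F g ∈ Gset (Fin m) (Fin n) k) := by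
  induction hf with
  | base f h =>
    cases h with
    | unitary U V hU hV =>
      refine ⟨⟨⟨fun X => U * X * V, fun X Y => by simp [mul_add, add_mul]⟩, fun c X => by simp⟩,
        ⟨⟨fun X => Uᴴ * X * Vᴴ, fun X Y => by simp [mul_add, add_mul]⟩, fun c X => by simp⟩,
        rfl, .base _ (.unitary _ _ hU.conjTranspose hV.conjTranspose), ?_, ?_, ?_, ?_⟩
      · intro X
        change U * (Uᴴ * X * Vᴴ) * V = X
        calc U * (Uᴴ * X * Vᴴ) * V = (U * Uᴴ) * X * (Vᴴ * V) := by simp only [Matrix.mul_assoc]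
          _ = X := by rw [hU.self_mul, hV.mul_self, Matrix.one_mul, Matrix.mul_one]
      · intro X
        change Uᴴ * (U * X * V) * Vᴴ = X
        calc Uᴴ * (U * X * V) * Vᴴ = (Uᴴ * U) * X * (V * Vᴴ) := by simp only [Matrix.mul_assoc]
          _ = X := by rw [hU.mul_self, hV.self_mul, Matrix.one_mul, Matrix.mul_one]
      · intro X Y
        change hs (U * Y * V) X = hs Y (Uᴴ * X * Vᴴ)
        rw [hs_eq_trace, hs_eq_trace, conjTranspose_mul, conjTranspose_mul]
        simp only [Matrix.mul_assoc]
        rw [trace_mul_comm Vᴴ]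
        simp only [Matrix.mul_assoc]
      · rintro _ ⟨v, w, h1, h2, h3, h4, rfl⟩
        refine ⟨U *ᵥ v, Vᴴ *ᵥ w, ?_, ?_, hU.SR h3, hV.conjTranspose.SR h4, mul_ketBra_mul U V v w⟩
        · rw [vinner_unitary hU.mul_self, h1]
        · rw [vinner_unitary hV.conjTranspose.mul_self, h2]
    | transpose =>
      refine ⟨⟨⟨fun X => Xᵀ, fun X Y => by simp⟩, fun c X => by simp⟩,
        ⟨⟨fun X => Xᵀ, fun X Y => by simp⟩, fun c X => by simp⟩,
        rfl, .base _ .transpose, ?_, ?_, ?_, ?_⟩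
      · intro X; exact transpose_transpose X
      · intro X; exact transpose_transpose X
      · intro X Y
        change hs Yᵀ X = hs Y Xᵀ
        rw [hs, hs, Finset.sum_comm]; rfl
      · rintro _ ⟨v, w, h1, h2, h3, h4, rfl⟩
        refine ⟨star w, star v, ?_, ?_, SR_star h4, SR_star h3, ?_⟩
        · rw [vinner_self_eq_one, nsq_star, vinner_self_eq_one.1 h2]
        · rw [vinner_self_eq_one, nsq_star, vinner_self_eq_one.1 h1]
        · change (ketBra v w)ᵀ = _
          ext p q
          simp [ketBra, vecMulVec_apply, mul_comm]
    | ptranspose hk =>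
      subst hk
      refine ⟨⟨⟨ptrans, fun X Y => rfl⟩, fun c X => rfl⟩,
        ⟨⟨ptrans, fun X Y => rfl⟩, fun c X => rfl⟩,
        rfl, .base _ (.ptranspose rfl), fun X => rfl, fun X => rfl, ?_, ?_⟩
      · intro X Y
        change hs (ptrans Y) X = hs Y (ptrans X)
        simp only [hs, ptrans, Fintype.sum_prod_type]
        refine Finset.sum_congr rfl fun i _ => ?_
        rw [Finset.sum_comm]
        conv_rhs => rw [Finset.sum_comm]
        refine Finset.sum_congr rfl fun j _ => ?_
        rw [Finset.sum_comm]
      · rintro _ ⟨v, w, h1, h2, h3, h4, rfl⟩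
        obtain ⟨a, b, rfl⟩ := SR_one_iff.1 h3
        obtain ⟨c, d, rfl⟩ := SR_one_iff.1 h4
        have hN : ∀ (a : Fin m → ℂ) (b : Fin n → ℂ), nsq (prodVec a b) = nsq a * nsq b := by
          intro a b
          simp [nsq, prodVec, Fintype.sum_prod_type, Finset.sum_mul_sum]
        rw [vinner_self_eq_one, hN] at h1 h2
        have : ptrans (ketBra (prodVec a b) (prodVec c d)) =
            ketBra (prodVec a (star d)) (prodVec c (star b)) := by
          ext p q
          simp only [ptrans, ketBra, vecMulVec_apply, prodVec, Pi.star_apply, star_mul', star_star]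
          ring
        change ptrans (ketBra (prodVec a b) (prodVec c d)) ∈ Gset (Fin m) (Fin n) 1
        rw [this]
        refine ketBra_mem_Gset (SR_prod _ _) (SR_prod _ _) ?_
        rw [hN, hN, nsq_star, nsq_star]
        linear_combination (nsq c * nsq d) * h1 + h2
  | comp f g hf hg ihf ihg =>
    obtain ⟨F, F', h1, h2, h3, h4, h5, h6⟩ := ihf
    obtain ⟨G, G', g1, g2, g3, g4, g5, g6⟩ := ihg
    refine ⟨F ∘ₗ G, G' ∘ₗ F', ?_, IsIsoComp.comp (⇑G') (⇑F') g2 h2, ?_, ?_, ?_, ?_⟩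
    · rw [← h1, ← g1]; rfl
    · intro X; simp [h3, g3]
    · intro X; simp [h4, g4]
    · intro X Y; simp [h5, g5]
    · intro X hX; exact h6 _ (g6 _ hX)

end Iso


section Descent
variable {I J : Type*} [Fintype I] [Fintype J]

theorem SR_det {ν : Type*} [Fintype ν] [DecidableEq ν] {k : ℕ} (hν : k < Fintype.card ν)
    {y : I × J → ℂ} (hy : SchmidtRankLE k y) (A : Matrix ν I ℂ) (B : Matrix J ν ℂ) :
    (A * (Matrix.of fun p q => y (p, q)) * B).det = 0 := by
  obtain ⟨a, b, rfl⟩ := hy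
  have h1 : (Matrix.of fun p q => (∑ i, prodVec (a i) (b i)) (p, q)) =
      (Matrix.of fun p i => a i p : Matrix I (Fin k) ℂ) * (Matrix.of fun i q => b i q) := by
    ext p q
    simp [mul_apply, prodVec]
  by_contra hdet
  have hu := rank_of_isUnit _ ((Matrix.isUnit_iff_isUnit_det _).2 (isUnit_iff_ne_zero.2 hdet))
  rw [h1, ← Matrix.mul_assoc, Matrix.mul_assoc] at hu
  have h2 := rank_mul_le_left (A * (Matrix.of fun p i => a i p : Matrix I (Fin k) ℂ))
    ((Matrix.of fun i q => b i q : Matrix (Fin k) J ℂ) * B)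
  have h3 := rank_le_card_width (A * (Matrix.of fun p i => a i p : Matrix I (Fin k) ℂ))
  rw [hu] at h2
  simp at h3
  omega

theorem exists_annihilator {k : ℕ} (a : Fin k → I → ℂ) (h : k < Fintype.card I) :
    ∃ α : I → ℂ, α ≠ 0 ∧ ∀ l, ∑ p, α p * a l p = 0 := by
  classical
  let f : (I → ℂ) →ₗ[ℂ] (Fin k → ℂ) := Matrix.mulVecLin (Matrix.of a)
  have hker : LinearMap.ker f ≠ ⊥ := LinearMap.ker_ne_bot_of_finrank_lt (by simpa using h)
  obtain ⟨α, h1, h2⟩ := Submodule.exists_mem_ne_zero_of_ne_bot hker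
  refine ⟨α, h2, fun l => ?_⟩
  have := congrFun (LinearMap.mem_ker.1 h1) l
  simp only [f, mulVecLin_apply, mulVec, dotProduct, of_apply, Pi.zero_apply] at this
  rw [← this]
  exact Finset.sum_congr rfl fun _ _ => mul_comm _ _

theorem exists_dual {ν : Type*} [Fintype ν] [DecidableEq ν] (c : ν → I → ℂ)
    (hc : LinearIndependent ℂ c) :
    ∃ α : ν → I → ℂ, ∀ i l, ∑ p, α i p * c l p = if i = l then 1 else 0 := by
  classical
  obtain ⟨g, hg⟩ := LinearMap.exists_leftInverse_of_injective (Fintype.linearCombination ℂ c)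
    (LinearMap.ker_eq_bot.2 hc.fintypeLinearCombination_injective)
  refine ⟨fun i p => g (Pi.single p 1) i, fun i l => ?_⟩
  have h1 := congrFun (LinearMap.congr_fun hg (Pi.single l 1)) i
  simp only [LinearMap.comp_apply, Fintype.linearCombination_apply_single, one_smul,
    LinearMap.id_apply] at h1
  have h2 : c l = ∑ p, c l p • (Pi.single p (1 : ℂ) : I → ℂ) := by
    ext q; simp [Finset.sum_apply, Pi.single_apply]
  rw [h2, map_sum, Finset.sum_apply] at h1
  simp only [map_smul, Pi.smul_apply, smul_eq_mul] at h1
  rw [Pi.single_apply] at h1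
  rw [← h1]
  exact Finset.sum_congr rfl fun _ _ => mul_comm _ _

theorem bad_functional {j : ℕ} (hI : j + 1 < Fintype.card I) (hJ : j + 1 < Fintype.card J)
    {x : I × J → ℂ} (hx : SchmidtRankLE (j + 1) x) (hx' : ¬ SchmidtRankLE j x) :
    ∃ (α : I → ℂ) (β : J → ℂ), α ≠ 0 ∧ β ≠ 0 ∧
      ∀ z : I × J → ℂ, (∀ t : ℂ, SchmidtRankLE (j + 1) (x + t • z)) →
        ∑ p, ∑ q, α p * z (p, q) * β q = 0 := by
  classical
  rw [SR_iff] at hx'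
  push Not at hx'
  obtain ⟨s, hs⟩ := hx'
  obtain ⟨γ, hγ⟩ := exists_dual _ hs
  obtain ⟨a, b, hab⟩ := hx
  obtain ⟨α, hα0, hα⟩ := exists_annihilator a hI
  obtain ⟨β, hβ0, hβ⟩ := exists_annihilator b hJ
  refine ⟨α, β, hα0, hβ0, fun z hz => ?_⟩
  let A : Matrix (Unit ⊕ Fin (j+1)) I ℂ := Matrix.of (Sum.elim (fun _ => α) γ)
  let B : Matrix J (Unit ⊕ Fin (j+1)) ℂ := Matrix.of fun q => Sum.elim (fun _ => β q)
    (fun l => if q = s l then 1 else 0)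
  let Y : (I × J → ℂ) → Matrix I J ℂ := fun z => Matrix.of fun p q => z (p, q)
  set Z := A * Y z * B with hZ
  have hαx : ∀ q, ∑ p, α p * x (p, q) = 0 := by
    intro q
    simp only [hab, Finset.sum_apply, prodVec, Finset.mul_sum]
    rw [Finset.sum_comm]
    refine Finset.sum_eq_zero fun l _ => ?_
    simp only [← mul_assoc]
    rw [← Finset.sum_mul, hα, zero_mul]
  have hβx : ∀ p, ∑ q, x (p, q) * β q = 0 := by
    intro p
    simp only [hab, Finset.sum_apply, prodVec, Finset.sum_mul]
    rw [Finset.sum_comm]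
    refine Finset.sum_eq_zero fun l _ => ?_
    have := hβ l
    calc ∑ q, a l p * b l q * β q = a l p * ∑ q, β q * b l q := by
          rw [Finset.mul_sum]; exact Finset.sum_congr rfl fun _ _ => by ring
      _ = 0 := by rw [this, mul_zero]
  have hD : A * Y x * B = fromBlocks 0 0 0 1 := by
    ext i l
    rcases i with i | i <;> rcases l with l | l
    · rw [mul_apply]
      simp only [mul_apply, A, Y, of_apply, Sum.elim_inl, hαx]
      simp
    · rw [mul_apply]
      simp only [mul_apply, A, Y, of_apply, Sum.elim_inl, hαx]
      simp
    · rw [Matrix.mul_assoc, mul_apply]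
      simp only [mul_apply, B, Y, of_apply, Sum.elim_inl, hβx]
      simp
    · rw [mul_apply]
      simp only [mul_apply, A, B, Y, of_apply, Sum.elim_inr, mul_ite, mul_one, mul_zero,
        Finset.sum_ite_eq', Finset.mem_univ, if_true]
      rw [hγ, fromBlocks_apply₂₂, Matrix.one_apply]
  let N : ℂ → Matrix (Unit ⊕ Fin (j+1)) (Unit ⊕ Fin (j+1)) ℂ := fun t =>
    fromBlocks Z.toBlocks₁₁ Z.toBlocks₁₂ (t • Z.toBlocks₂₁) (1 + t • Z.toBlocks₂₂)
  have hN : ∀ t : ℂ, t ≠ 0 → (N t).det = 0 := by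
    intro t ht
    have h1 := SR_det (ν := Unit ⊕ Fin (j+1)) (by simp) (hz t) A B
    have h2 : A * (Matrix.of fun p q => (x + t • z) (p, q)) * B =
        diagonal (Sum.elim (fun _ => t) (fun _ => 1)) * N t := by
      have : (Matrix.of fun p q => (x + t • z) (p, q)) = Y x + t • Y z := by
        ext p q; simp [Y]
      rw [this, Matrix.mul_add, Matrix.add_mul, hD, Matrix.mul_smul, Matrix.smul_mul, ← hZ]
      ext i l
      rw [diagonal_mul]
      rcases i with i | i <;> rcases l with l | l <;>
        simp [N, toBlocks₁₁, toBlocks₁₂, toBlocks₂₁, toBlocks₂₂]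
    rw [h2, det_mul, det_diagonal] at h1
    rcases mul_eq_zero.1 h1 with h3 | h3
    · exfalso
      rw [Fintype.prod_sum_type] at h3
      simp at h3
      exact ht h3
    · exact h3
  have hcont : Continuous fun t => (N t).det := by
    apply Continuous.matrix_det
    apply Continuous.matrix_fromBlocks <;> fun_prop
  have hN0 : (N 0).det = 0 := by
    have hcl : IsClosed {t | (N t).det = 0} := isClosed_eq hcont continuous_const
    have hden : Dense ({0}ᶜ : Set ℂ) := dense_compl_singleton 0
    have : ({0}ᶜ : Set ℂ) ⊆ {t | (N t).det = 0} := fun t ht => hN t ht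
    have h2 := hcl.closure_subset_iff.2 this
    rw [hden.closure_eq] at h2
    exact h2 (Set.mem_univ 0)
  simp only [N, zero_smul, add_zero] at hN0
  rw [det_fromBlocks_zero₂₁, det_one, mul_one, det_unique] at hN0
  have h3 : Z (Sum.inl ()) (Sum.inl ()) = 0 := hN0
  rw [← h3, hZ, Matrix.mul_assoc, mul_apply]
  refine Finset.sum_congr rfl fun p _ => ?_
  simp only [mul_apply, A, B, Y, of_apply, Sum.elim_inl, Finset.mul_sum, mul_assoc]

/-- the cone over `Gset` -/
def Cset (I J : Type*) (k : ℕ) : Set (Matrix (I × J) (I × J) ℂ) :=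
  {X | ∃ v w, SchmidtRankLE k v ∧ SchmidtRankLE k w ∧ X = vecMulVec v w}

/-- span of the directions of lines through `T` inside the cone -/
def Lspan (k : ℕ) (T : Matrix (I × J) (I × J) ℂ) : Submodule ℂ (Matrix (I × J) (I × J) ℂ) :=
  Submodule.span ℂ {Z | ∀ t : ℂ, T + t • Z ∈ Cset I J k}

/-- the map sending a pair of vectors `(p, q)` to `p ⊗ y + x ⊗ q` -/
def Fmap {A : Type*} (x y : A → ℂ) : ((A → ℂ) × (A → ℂ)) →ₗ[ℂ] Matrix A A ℂ where
  toFun z := vecMulVec z.1 y + vecMulVec x z.2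
  map_add' z z' := by ext p q; simp [vecMulVec_apply]; ring
  map_smul' c z := by ext p q; simp [vecMulVec_apply]; ring

theorem Fmap_finrank {A : Type*} [Fintype A] {x y : A → ℂ} (hx : x ≠ 0) (hy : y ≠ 0) :
    Module.finrank ℂ (LinearMap.range (Fmap x y)) + 1 = 2 * Fintype.card A := by
  have h1 := LinearMap.finrank_range_add_finrank_ker (Fmap x y)
  have h2 : LinearMap.ker (Fmap x y) = Submodule.span ℂ {(x, -y)} := by
    ext ⟨x', y'⟩
    rw [LinearMap.mem_ker, Submodule.mem_span_singleton]
    constructor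
    · intro h
      have h' : ∀ p q, x' p * y q + x p * y' q = 0 := fun p q => by
        have := congrFun (congrFun h p) q
        simpa [Fmap, vecMulVec_apply] using this
      obtain ⟨p, hp⟩ := Function.ne_iff.1 hx
      obtain ⟨q, hq⟩ := Function.ne_iff.1 hy
      simp only [Pi.zero_apply] at hp hq
      have hc : ∀ p', x' p' = x' p / x p * x p' := by
        intro p'
        have e1 := h' p q
        have e2 := h' p' q
        field_simp
        apply mul_right_cancel₀ hq
        linear_combination x p * e2 - x p' * e1
      refine ⟨x' p / x p, Prod.ext ?_ ?_⟩
      · ext p'; simp [hc p']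
      · ext q'
        have e1 := h' p q'
        simp
        field_simp
        linear_combination -e1
    · rintro ⟨c, hc⟩
      rw [Prod.ext_iff] at hc
      simp only at hc
      ext p q
      have e1 := congrFun hc.1 p
      have e2 := congrFun hc.2 q
      simp at e1 e2
      simp [Fmap, vecMulVec_apply, ← e1, ← e2]
      ring
  have h3 : Module.finrank ℂ (LinearMap.ker (Fmap x y)) = 1 := by
    rw [h2]
    exact finrank_span_singleton (fun h => hx (congrArg Prod.fst h))
  rw [h3] at h1
  rw [h1, Module.finrank_prod, Module.finrank_pi]
  ring

theorem Lspan_le {k : ℕ} {x y : I × J → ℂ} (hx : x ≠ 0) (hy : y ≠ 0) :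
    Lspan k (vecMulVec x y) ≤ LinearMap.range (Fmap x y) := by
  rw [Lspan, Submodule.span_le]
  intro Z hZ
  obtain ⟨p, hp⟩ := Function.ne_iff.1 hx
  obtain ⟨q, hq⟩ := Function.ne_iff.1 hy
  simp only [Pi.zero_apply] at hp hq
  have key : ∀ p' q', x p * y q * Z p' q' + Z p q * (x p' * y q') =
      x p * y q' * Z p' q + Z p q' * (x p' * y q) := by
    intro p' q'
    have hm : ∀ t : ℂ, (x p * y q + t * Z p q) * (x p' * y q' + t * Z p' q') =
        (x p * y q' + t * Z p q') * (x p' * y q + t * Z p' q) := by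
      intro t
      obtain ⟨v, w, -, -, h⟩ := hZ t
      have e : ∀ a b, x a * y b + t * Z a b = v a * w b := fun a b => by
        have := congrFun (congrFun h a) b
        simpa [vecMulVec_apply] using this
      rw [e, e, e, e]; ring
    have e1 := hm 1
    have e2 := hm (-1)
    linear_combination (1/2) * e1 - (1/2) * e2
  refine ⟨(fun p' => (Z p' q - Z p q * x p' / x p) / y q, fun q' => Z p q' / x p), ?_⟩
  ext p' q'
  have := key p' q'
  simp only [Fmap, LinearMap.coe_mk, AddHom.coe_mk, Matrix.add_apply, vecMulVec_apply]
  field_simp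
  linear_combination -this

theorem Lspan_good {j : ℕ} {x y : I × J → ℂ} (hx : SchmidtRankLE j x) (hy : SchmidtRankLE j y) :
    LinearMap.range (Fmap x y) ≤ Lspan (j + 1) (vecMulVec x y) := by
  classical
  rintro _ ⟨⟨x', y'⟩, rfl⟩
  have h1 : ∀ p, vecMulVec (Pi.single p 1) y ∈ Lspan (j + 1) (vecMulVec x y) := by
    intro p
    refine Submodule.subset_span fun t => ⟨x + t • Pi.single p 1, y,
      SR_add hx (SR_smul t (SR_single le_rfl p)), SR_mono (Nat.le_succ j) hy, ?_⟩
    ext a b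
    simp [vecMulVec_apply]; ring
  have h2 : ∀ p, vecMulVec x (Pi.single p 1) ∈ Lspan (j + 1) (vecMulVec x y) := by
    intro p
    refine Submodule.subset_span fun t => ⟨x, y + t • Pi.single p 1,
      SR_mono (Nat.le_succ j) hx, SR_add hy (SR_smul t (SR_single le_rfl p)), ?_⟩
    ext a b
    simp [vecMulVec_apply]; ring
  have e1 : vecMulVec x' y = ∑ p, x' p • vecMulVec (Pi.single p 1) y := by
    ext a b
    simp [Matrix.sum_apply, vecMulVec_apply, Pi.single_apply]
  have e2 : vecMulVec x y' = ∑ p, y' p • vecMulVec x (Pi.single p 1) := by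
    ext a b
    simp [Matrix.sum_apply, vecMulVec_apply, Pi.single_apply, mul_comm]
  change vecMulVec x' y + vecMulVec x y' ∈ _
  rw [e1, e2]
  exact Submodule.add_mem _ (Submodule.sum_mem _ fun p _ => Submodule.smul_mem _ _ (h1 p))
    (Submodule.sum_mem _ fun p _ => Submodule.smul_mem _ _ (h2 p))

theorem Lspan_bad_left {j : ℕ} (hI : j + 1 < Fintype.card I) (hJ : j + 1 < Fintype.card J)
    {x y : I × J → ℂ} (hy0 : y ≠ 0)
    (hx : SchmidtRankLE (j + 1) x)
    (h : LinearMap.range (Fmap x y) ≤ Lspan (j + 1) (vecMulVec x y)) : SchmidtRankLE j x := by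
  classical
  by_contra hx'
  obtain ⟨α, β, hα, hβ, hz⟩ := bad_functional hI hJ hx hx'
  obtain ⟨q, hq⟩ := Function.ne_iff.1 hy0
  simp only [Pi.zero_apply] at hq
  let φ : Matrix (I × J) (I × J) ℂ →ₗ[ℂ] ℂ :=
    { toFun := fun Z => ∑ a, ∑ b, α a * Z (a, b) q * β b
      map_add' := fun Z Z' => by simp [mul_add, add_mul, Finset.sum_add_distrib]
      map_smul' := fun c Z => by
        simp only [Matrix.smul_apply, smul_eq_mul, Finset.mul_sum, RingHom.id_apply]
        exact Finset.sum_congr rfl fun _ _ => Finset.sum_congr rfl fun _ _ => by ring }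
  have hle : Lspan (j + 1) (vecMulVec x y) ≤ LinearMap.ker φ := by
    rw [Lspan, Submodule.span_le]
    intro Z hZ
    rw [SetLike.mem_coe, LinearMap.mem_ker]
    apply hz (fun p => Z p q)
    intro t
    obtain ⟨v, w, hv, -, e⟩ := hZ (t * y q)
    refine SR_of_eq ?_ (SR_smul ((y q)⁻¹ * w q) hv)
    ext p
    have := congrFun (congrFun e p) q
    simp only [vecMulVec_apply, Matrix.add_apply, Matrix.smul_apply, smul_eq_mul] at this
    simp only [Pi.smul_apply, Pi.add_apply, smul_eq_mul]
    field_simp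
    linear_combination -this
  obtain ⟨a, ha⟩ := Function.ne_iff.1 hα
  obtain ⟨b, hb⟩ := Function.ne_iff.1 hβ
  simp only [Pi.zero_apply] at ha hb
  have h1 : φ (Fmap x y (Pi.single (a, b) 1, 0)) = 0 := hle (h ⟨_, rfl⟩)
  have h2 : φ (Fmap x y (Pi.single (a, b) 1, 0)) = α a * y q * β b := by
    simp only [φ, LinearMap.coe_mk, AddHom.coe_mk, Fmap, Matrix.add_apply, vecMulVec_apply,
      Pi.zero_apply, mul_zero, add_zero, Pi.single_apply, Prod.mk.injEq]
    rw [Finset.sum_eq_single a]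
    · rw [Finset.sum_eq_single b]
      · simp
      · intro b' _ hb'; simp [hb']
      · simp
    · intro a' _ ha'; simp [ha']
    · simp
  rw [h2] at h1
  simp [ha, hb, hq] at h1

theorem Cset_transpose {k : ℕ} {X : Matrix (I × J) (I × J) ℂ} (h : X ∈ Cset I J k) :
    Xᵀ ∈ Cset I J k := by
  obtain ⟨v, w, hv, hw, rfl⟩ := h
  exact ⟨w, v, hw, hv, by rw [transpose_vecMulVec]⟩

theorem Lspan_bad_right {j : ℕ} (hI : j + 1 < Fintype.card I) (hJ : j + 1 < Fintype.card J)
    {x y : I × J → ℂ} (hx0 : x ≠ 0)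
    (hy : SchmidtRankLE (j + 1) y)
    (h : LinearMap.range (Fmap x y) ≤ Lspan (j + 1) (vecMulVec x y)) : SchmidtRankLE j y := by
  refine Lspan_bad_left hI hJ hx0 hy ?_
  let T : Matrix (I × J) (I × J) ℂ →ₗ[ℂ] Matrix (I × J) (I × J) ℂ :=
    (transposeLinearEquiv (I × J) (I × J) ℂ ℂ).toLinearMap
  have h1 : Submodule.map T (Lspan (j + 1) (vecMulVec x y)) ≤ Lspan (j + 1) (vecMulVec y x) := by
    rw [Lspan, Submodule.map_span_le]
    intro Z hZ
    refine Submodule.subset_span fun t => ?_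
    have := Cset_transpose (hZ t)
    rw [transpose_add, transpose_smul, transpose_vecMulVec] at this
    exact this
  rintro _ ⟨⟨y', x'⟩, rfl⟩
  apply h1
  refine ⟨_, h ⟨(x', y'), rfl⟩, ?_⟩
  change (vecMulVec x' y + vecMulVec x y')ᵀ = vecMulVec y' x + vecMulVec y x'
  rw [transpose_add, transpose_vecMulVec, transpose_vecMulVec, add_comm]

theorem Cset_mono {j k : ℕ} (h : j ≤ k) {X : Matrix (I × J) (I × J) ℂ} (hX : X ∈ Cset I J j) :
    X ∈ Cset I J k := by
  obtain ⟨v, w, hv, hw, rfl⟩ := hX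
  exact ⟨v, w, SR_mono h hv, SR_mono h hw, rfl⟩

theorem descent {j : ℕ} (hI : j + 1 < Fintype.card I) (hJ : j + 1 < Fintype.card J)
    (Θ : Matrix (I × J) (I × J) ℂ →ₗ[ℂ] Matrix (I × J) (I × J) ℂ) (hinj : Function.Injective Θ)
    (hΘ : ∀ X ∈ Cset I J (j + 1), Θ X ∈ Cset I J (j + 1)) :
    ∀ X ∈ Cset I J j, Θ X ∈ Cset I J j := by
  intro X hX
  by_cases h0 : X = 0
  · subst h0; simpa using hX
  have h0' : Θ X ≠ 0 := fun h => h0 (hinj (by rw [h, map_zero]))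
  obtain ⟨v, w, hv, hw, hXe⟩ := hΘ X (Cset_mono (Nat.le_succ j) hX)
  obtain ⟨x, y, hx, hy, rfl⟩ := hX
  have hx0 : x ≠ 0 := by rintro rfl; simp at h0
  have hy0 : y ≠ 0 := by rintro rfl; simp at h0
  have hv0 : v ≠ 0 := by rintro rfl; rw [hXe] at h0'; simp at h0'
  have hw0 : w ≠ 0 := by rintro rfl; rw [hXe] at h0'; simp at h0'
  have h1 : Submodule.map Θ (Lspan (j + 1) (vecMulVec x y)) ≤ Lspan (j + 1) (vecMulVec v w) := by
    rw [Lspan, Submodule.map_span_le]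
    intro Z hZ
    refine Submodule.subset_span fun t => ?_
    have := hΘ _ (hZ t)
    rwa [map_add, map_smul, hXe] at this
  have h2 := Submodule.finrank_mono h1
  rw [← (Submodule.equivMapOfInjective Θ hinj (Lspan (j + 1) (vecMulVec x y))).finrank_eq] at h2
  have h3 := Submodule.finrank_mono (Lspan_good hx hy)
  have h4 := Fmap_finrank hx0 hy0
  have h5 := Fmap_finrank hv0 hw0
  have h6 : Lspan (j + 1) (vecMulVec v w) = LinearMap.range (Fmap v w) :=
    Submodule.eq_of_le_of_finrank_le (Lspan_le hv0 hw0) (by omega)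
  exact ⟨v, w, Lspan_bad_left hI hJ hw0 hv h6.ge, Lspan_bad_right hI hJ hv0 hw h6.ge, hXe⟩

theorem descent_le {k : ℕ} (hI : k < Fintype.card I) (hJ : k < Fintype.card J)
    (Θ : Matrix (I × J) (I × J) ℂ →ₗ[ℂ] Matrix (I × J) (I × J) ℂ) (hinj : Function.Injective Θ)
    (hΘ : ∀ X ∈ Cset I J k, Θ X ∈ Cset I J k) {j : ℕ} (hj : j ≤ k) :
    ∀ X ∈ Cset I J j, Θ X ∈ Cset I J j := by
  induction hj using Nat.decreasingInduction with
  | self => exact hΘ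
  | of_succ i hi ih => exact descent (by omega) (by omega) Θ hinj ih

theorem Cset_of_Gset {k : ℕ}
    (Θ : Matrix (I × J) (I × J) ℂ →ₗ[ℂ] Matrix (I × J) (I × J) ℂ)
    (hΘ : ∀ X ∈ Gset I J k, Θ X ∈ Gset I J k) :
    ∀ X ∈ Cset I J k, Θ X ∈ Cset I J k ∧ nsqM (Θ X) = nsqM X := by
  intro X hX
  by_cases h0 : X = 0
  · subst h0; rw [map_zero]; exact ⟨hX, rfl⟩
  have hn : 0 < nsqM X := lt_of_le_of_ne (nsqM_nonneg X) (fun h => h0 (nsqM_eq_zero.1 h.symm))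
  set t : ℝ := Real.sqrt (nsqM X) with ht
  have ht0 : 0 < t := Real.sqrt_pos.2 hn
  have htt : t * t = nsqM X := Real.mul_self_sqrt hn.le
  obtain ⟨v, w, hv, hw, rfl⟩ := hX
  have hG : ((t⁻¹ : ℝ) : ℂ) • vecMulVec v w ∈ Gset I J k := by
    have : ((t⁻¹ : ℝ) : ℂ) • vecMulVec v w = ketBra (((t⁻¹ : ℝ) : ℂ) • v) (star w) := by
      ext p q; simp [ketBra, vecMulVec_apply, mul_assoc]
    rw [this]
    refine ketBra_mem_Gset (SR_smul _ hv) (SR_star hw) ?_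
    rw [nsq_smul, nsq_star, Complex.normSq_ofReal, mul_assoc, ← nsqM_vecMulVec, ← htt]
    field_simp
  have h1 := hΘ _ hG
  have h2 : Θ (vecMulVec v w) = (t : ℂ) • Θ (((t⁻¹ : ℝ) : ℂ) • vecMulVec v w) := by
    rw [map_smul, smul_smul]
    have : (t : ℂ) ≠ 0 := by exact_mod_cast ht0.ne'
    simp [this]
  rw [h2]
  constructor
  · obtain ⟨v', w', -, -, a3, a4, a5⟩ := h1
    rw [a5]
    refine ⟨(t : ℂ) • v', star w', SR_smul _ a3, SR_star a4, ?_⟩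
    ext p q; simp [ketBra, vecMulVec_apply, mul_assoc]
  · rw [nsqM_smul, Gset_nsq h1, Complex.normSq_ofReal, htt, mul_one]

end Descent


section Decomp

def par {α : Type*} (u v : α → ℂ) : Prop := ∀ x y, u x * v y = u y * v x

theorem par_refl {α : Type*} (u : α → ℂ) : par u u := fun _ _ => mul_comm _ _

theorem par_symm {α : Type*} {u v : α → ℂ} (h : par u v) : par v u := fun x y => by
  have := h y x
  linear_combination this

theorem par_trans {α : Type*} {u v w : α → ℂ} (hv : v ≠ 0) (h : par u v) (h' : par v w) :
    par u w := by
  obtain ⟨z, hz⟩ := Function.ne_iff.1 hv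
  intro x y
  apply mul_left_cancel₀ hz
  linear_combination w y * h x z + u z * h' x y - w x * h y z

theorem par_smul_of {α : Type*} {u v : α → ℂ} (hu : u ≠ 0) (h : par u v) : ∃ t : ℂ, v = t • u := by
  obtain ⟨z, hz⟩ := Function.ne_iff.1 hu
  simp only [Pi.zero_apply] at hz
  refine ⟨v z / u z, ?_⟩
  ext x
  have := h z x
  simp only [Pi.smul_apply, smul_eq_mul]
  field_simp
  linear_combination this

theorem par_of_smul {α : Type*} {u v : α → ℂ} {t : ℂ} (h : v = t • u) : par u v := by
  subst h; intro x y; simp; ring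

theorem exists_not_par {α : Type*} [Nontrivial α] (u : α → ℂ) (hu : u ≠ 0) :
    ∃ c : α → ℂ, c ≠ 0 ∧ ¬ par u c := by
  classical
  obtain ⟨z, hz⟩ := Function.ne_iff.1 hu
  obtain ⟨y, hy⟩ := exists_ne z
  refine ⟨Pi.single y 1, by simp, fun h => hz ?_⟩
  have := h z y
  simpa [hy.symm] using this

variable {ι : Type*} [Fintype ι] [DecidableEq ι] {κ : ι → Type*}

/-- Decomposable tensor. -/
def PT (a : ∀ i, κ i → ℂ) : (∀ i, κ i) → ℂ := fun x => ∏ i, a i (x i)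

def QT (a : ∀ i, κ i → ℂ) (i : ι) (x : ∀ i, κ i) : ℂ := ∏ l ∈ Finset.univ.erase i, a l (x l)

theorem PT_eq (a : ∀ i, κ i → ℂ) (i : ι) (x : ∀ i, κ i) : PT a x = a i (x i) * QT a i x :=
  (Finset.mul_prod_erase _ _ (Finset.mem_univ i)).symm

theorem QT_update (a : ∀ i, κ i → ℂ) (i : ι) (c : κ i → ℂ) (x : ∀ i, κ i) :
    QT (Function.update a i c) i x = QT a i x := by
  refine Finset.prod_congr rfl fun l hl => ?_
  rw [Function.update_of_ne (Finset.ne_of_mem_erase hl)]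

theorem QT_update' (a : ∀ i, κ i → ℂ) (i : ι) (s : κ i) (x : ∀ i, κ i) :
    QT a i (Function.update x i s) = QT a i x := by
  refine Finset.prod_congr rfl fun l hl => ?_
  rw [Function.update_of_ne (Finset.ne_of_mem_erase hl)]

theorem PT_update (a : ∀ i, κ i → ℂ) (i : ι) (c : κ i → ℂ) (x : ∀ i, κ i) :
    PT (Function.update a i c) x = c (x i) * QT a i x := by
  rw [PT_eq _ i, QT_update, Function.update_self]

theorem PT_at_update (a : ∀ i, κ i → ℂ) (i : ι) (s : κ i) (x : ∀ i, κ i) :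
    PT a (Function.update x i s) = a i s * QT a i x := by
  rw [PT_eq _ i, QT_update', Function.update_self]

theorem PT_update_add (a : ∀ i, κ i → ℂ) (i : ι) (c d : κ i → ℂ) :
    PT (Function.update a i (c + d)) = PT (Function.update a i c) + PT (Function.update a i d) := by
  ext x; simp [PT_update, add_mul]

theorem PT_update_smul (a : ∀ i, κ i → ℂ) (i : ι) (t : ℂ) (c : κ i → ℂ) :
    PT (Function.update a i (t • c)) = t • PT (Function.update a i c) := by
  ext x; simp [PT_update, mul_assoc]

theorem PT_smul (r : ι → ℂ) (a : ∀ i, κ i → ℂ) :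
    PT (fun i => r i • a i) = (∏ i, r i) • PT a := by
  ext x; simp [PT, Finset.prod_mul_distrib]

theorem exists_pt {a : ∀ i, κ i → ℂ} (ha : ∀ i, a i ≠ 0) : ∃ x : ∀ i, κ i, ∀ i, a i (x i) ≠ 0 := by
  choose x hx using fun i => Function.ne_iff.1 (ha i)
  exact ⟨x, hx⟩

theorem PT_ne_zero {a : ∀ i, κ i → ℂ} (ha : ∀ i, a i ≠ 0) : PT a ≠ 0 := by
  obtain ⟨x, hx⟩ := exists_pt ha
  exact Function.ne_iff.2 ⟨x, Finset.prod_ne_zero_iff.2 fun i _ => hx i⟩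

theorem NZ_of_PT {a : ∀ i, κ i → ℂ} (h : PT a ≠ 0) : ∀ i, a i ≠ 0 := by
  intro i hi
  apply h
  ext x
  rw [PT_eq a i, hi]; simp

theorem NZ_update {a : ∀ i, κ i → ℂ} (ha : ∀ i, a i ≠ 0) {i : ι} {c : κ i → ℂ} (hc : c ≠ 0) :
    ∀ l, Function.update a i c l ≠ 0 := by
  intro l
  by_cases h : l = i
  · subst h; simpa using hc
  · rw [Function.update_of_ne h]; exact ha l

theorem par_PT {a b : ∀ i, κ i → ℂ} (ha : ∀ i, a i ≠ 0) (hb : ∀ i, b i ≠ 0)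
    (h : par (PT a) (PT b)) (i : ι) : par (a i) (b i) := by
  obtain ⟨t, ht⟩ := par_smul_of (PT_ne_zero ha) h
  obtain ⟨x, hx⟩ := exists_pt hb
  have hQ : QT b i x ≠ 0 := Finset.prod_ne_zero_iff.2 fun l _ => hx l
  refine par_of_smul (t := t * QT a i x / QT b i x) ?_
  ext s
  have := congrFun ht (Function.update x i s)
  rw [Pi.smul_apply, PT_at_update, PT_at_update] at this
  simp only [Pi.smul_apply, smul_eq_mul] at this ⊢
  field_simp
  linear_combination this

theorem PT_of_par {a b : ∀ i, κ i → ℂ} (ha : ∀ i, a i ≠ 0)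
    (j : ι) (h : ∀ l, l ≠ j → par (a l) (b l)) : ∃ u, PT b = PT (Function.update a j u) := by
  have : ∀ l, ∃ t : ℂ, l ≠ j → b l = t • a l := by
    intro l
    by_cases hl : l = j
    · exact ⟨0, fun h => absurd hl h⟩
    · obtain ⟨t, ht⟩ := par_smul_of (ha l) (h l hl)
      exact ⟨t, fun _ => ht⟩
  choose t ht using this
  refine ⟨(∏ l ∈ Finset.univ.erase j, t l) • b j, ?_⟩
  ext x
  rw [PT_update, PT_eq b j]
  have : QT b j x = (∏ l ∈ Finset.univ.erase j, t l) * QT a j x := by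
    rw [QT, QT, ← Finset.prod_mul_distrib]
    refine Finset.prod_congr rfl fun l hl => ?_
    rw [ht l (Finset.ne_of_mem_erase hl)]; rfl
  rw [this]; simp; ring

theorem PT_of_par_all {a b : ∀ i, κ i → ℂ} (ha : ∀ i, a i ≠ 0)
    (h : ∀ l, par (a l) (b l)) : ∃ t : ℂ, PT b = t • PT a := by
  choose t ht using fun l => par_smul_of (ha l) (h l)
  refine ⟨∏ l, t l, ?_⟩
  rw [← PT_smul]
  congr 1
  funext l
  exact ht l

theorem minors [Nonempty ι] {a b d : ∀ i, κ i → ℂ} (ha : ∀ i, a i ≠ 0) (hb : ∀ i, b i ≠ 0)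
    (h : PT a + PT b = PT d) : ∃ j, ∀ l, l ≠ j → par (a l) (b l) := by
  by_cases hall : ∀ l, par (a l) (b l)
  · exact ⟨Classical.arbitrary ι, fun l _ => hall l⟩
  push Not at hall
  obtain ⟨j, hj⟩ := hall
  refine ⟨j, ?_⟩
  unfold par at hj
  push Not at hj
  obtain ⟨s, t, hst⟩ := hj
  have key : ∀ x y, QT a j x * QT b j y = QT a j y * QT b j x := by
    intro x y
    have e : ∀ x s, a j s * QT a j x + b j s * QT b j x = d j s * QT d j x := by
      intro x s
      have := congrFun h (Function.update x j s)
      simpa [PT_at_update] using this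
    have h1 := e x s
    have h2 := e y t
    have h3 := e x t
    have h4 := e y s
    have : (a j s * b j t - a j t * b j s) * (QT a j x * QT b j y - QT a j y * QT b j x) = 0 := by
      have : (a j s * QT a j x + b j s * QT b j x) * (a j t * QT a j y + b j t * QT b j y) =
        (a j t * QT a j x + b j t * QT b j x) * (a j s * QT a j y + b j s * QT b j y) := by
        rw [h1, h2, h3, h4]; ring
      linear_combination this
    rcases mul_eq_zero.1 this with h | h
    · exact absurd (sub_eq_zero.1 h) hst
    · exact sub_eq_zero.1 h
  intro l hl
  obtain ⟨x0, -⟩ := exists_pt ha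
  have h1 : (fun _ => 1 : κ j → ℂ) ≠ 0 := Function.ne_iff.2 ⟨x0 j, by simp⟩
  have := par_PT (NZ_update ha h1) (NZ_update hb h1) (by
    intro x y
    simp only [PT_update, one_mul]
    exact key x y) l
  rwa [Function.update_of_ne hl, Function.update_of_ne hl] at this

theorem lam_lemma {V W : Type*} [AddCommGroup V] [Module ℂ V] [AddCommGroup W] [Module ℂ W]
    (G₁ G₂ : V →ₗ[ℂ] W) (hinj : Function.Injective G₂) (h : ∀ c, ∃ μ : ℂ, G₁ c = μ • G₂ c)
    {c₀ : V} (h0 : G₁ c₀ = G₂ c₀) (hc : c₀ ≠ 0) (c : V) : G₁ c = G₂ c := by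
  by_cases hl : ∃ t : ℂ, c = t • c₀
  · obtain ⟨t, rfl⟩ := hl; simp [h0]
  push Not at hl
  obtain ⟨μ, hμ⟩ := h c
  obtain ⟨ν, hν⟩ := h (c + c₀)
  rw [map_add, map_add, hμ, h0] at hν
  have h1 : (ν - μ) • c = (1 - ν) • c₀ := by
    apply hinj
    rw [map_smul, map_smul, sub_smul, sub_smul, one_smul]
    rw [smul_add] at hν
    rw [sub_eq_sub_iff_add_eq_add, ← hν, add_comm]
  by_cases h2 : ν - μ = 0
  · rw [h2, zero_smul] at h1
    have h3 : 1 - ν = 0 := by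
      rcases smul_eq_zero.1 h1.symm with h | h
      · exact h
      · exact absurd h hc
    have : μ = 1 := by linear_combination -h2 - h3
    rw [hμ, this, one_smul]
  · exact absurd (by rw [div_eq_inv_mul, mul_smul, ← h1, smul_smul, inv_mul_cancel₀ h2, one_smul])
      (hl ((1 - ν) / (ν - μ)))

end Decomp


section Types

variable {ι : Type*} [Fintype ι] [DecidableEq ι] {κ : ι → Type*}

/-- `Φ` maps decomposable tensors to decomposable tensors (via `F`), and so does its inverse. -/
structure DP (Φ Φi : ((∀ i, κ i) → ℂ) →ₗ[ℂ] ((∀ i, κ i) → ℂ))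
    (F : (∀ i, κ i → ℂ) → (∀ i, κ i → ℂ)) : Prop where
  inv : ∀ x, Φi (Φ x) = x
  map : ∀ a, Φ (PT a) = PT (F a)
  imap : ∀ a, ∃ b, Φi (PT a) = PT b

variable {Φ Φi : ((∀ i, κ i) → ℂ) →ₗ[ℂ] ((∀ i, κ i) → ℂ)}
    {F : (∀ i, κ i → ℂ) → (∀ i, κ i → ℂ)}

theorem DP.inj (h : DP Φ Φi F) : Function.Injective Φ :=
  Function.LeftInverse.injective h.inv

theorem DP.nz (h : DP Φ Φi F) {a : ∀ i, κ i → ℂ} (ha : ∀ i, a i ≠ 0) : ∀ i, F a i ≠ 0 := by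
  apply NZ_of_PT
  rw [← h.map]
  intro h0
  exact PT_ne_zero ha (h.inj (by rw [h0, map_zero]))

theorem DP.L1 [Nonempty ι] (h : DP Φ Φi F) {a : ∀ i, κ i → ℂ} (ha : ∀ i, a i ≠ 0)
    {i : ι} {c : κ i → ℂ} (hc : c ≠ 0) :
    ∃ j, ∀ l, l ≠ j → par (F a l) (F (Function.update a i c) l) := by
  refine minors (d := F (Function.update a i (a i + c))) (h.nz ha) (h.nz (NZ_update ha hc)) ?_
  rw [← h.map, ← h.map, ← h.map, PT_update_add, map_add, Function.update_eq_self]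

theorem DP.L2 (h : DP Φ Φi F) {a b : ∀ i, κ i → ℂ} (ha : ∀ i, a i ≠ 0) (hb : ∀ i, b i ≠ 0)
    (hp : ∀ l, par (F a l) (F b l)) (l : ι) : par (a l) (b l) := by
  obtain ⟨t, ht⟩ := PT_of_par_all (h.nz ha) hp
  rw [← h.map, ← h.map, ← map_smul] at ht
  exact par_PT ha hb (par_of_smul (h.inj ht)) l

def Tp (F : (∀ i, κ i → ℂ) → (∀ i, κ i → ℂ)) (a : ∀ i, κ i → ℂ) (i j : ι) : Prop :=
  ∀ c : κ i → ℂ, c ≠ 0 → ∀ l, l ≠ j → par (F a l) (F (Function.update a i c) l)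

theorem Tp.not_par (h : DP Φ Φi F) {a : ∀ i, κ i → ℂ} (ha : ∀ i, a i ≠ 0) {i j : ι}
    (hT : Tp F a i j) {c : κ i → ℂ} (hc : c ≠ 0) (hn : ¬ par (a i) c) :
    ¬ par (F a j) (F (Function.update a i c) j) := by
  intro hj
  apply hn
  have := h.L2 ha (NZ_update ha hc) (fun l => by
    by_cases hl : l = j
    · subst hl; exact hj
    · exact hT c hc l hl) i
  simpa using this

theorem Tp.exists [Nonempty ι] [∀ i, Nontrivial (κ i)] (h : DP Φ Φi F) {a : ∀ i, κ i → ℂ}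
    (ha : ∀ i, a i ≠ 0) (i : ι) : ∃ j, Tp F a i j := by
  obtain ⟨c₀, hc₀, hn⟩ := exists_not_par (a i) (ha i)
  obtain ⟨j, hj⟩ := h.L1 ha hc₀
  have hnj : ¬ par (F a j) (F (Function.update a i c₀) j) := by
    intro hj'
    apply hn
    have := h.L2 ha (NZ_update ha hc₀) (fun l => by
      by_cases hl : l = j
      · subst hl; exact hj'
      · exact hj l hl) i
    simpa using this
  refine ⟨j, fun c hc l hl => ?_⟩
  by_contra hnl
  obtain ⟨j₁, h1⟩ := h.L1 ha hc
  obtain ⟨j₂, h2⟩ := h.L1 (NZ_update ha hc₀) hc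
  rw [Function.update_idem] at h2
  have e1 : l = j₁ := by by_contra hne; exact hnl (h1 l hne)
  subst e1
  have f1 : j = j₂ := by
    by_contra hne
    exact hnj (par_trans (h.nz (NZ_update ha hc) j) (h1 j (Ne.symm hl)) (par_symm (h2 j hne)))
  have f2 : l = j₂ := by
    by_contra hne
    exact hnl (par_trans (h.nz (NZ_update ha hc₀) l) (hj l hl) (h2 l hne))
  exact hl (f2.trans f1.symm)

theorem Tp.stable (h : DP Φ Φi F) {a : ∀ i, κ i → ℂ} (ha : ∀ i, a i ≠ 0) {i j : ι}
    (hT : Tp F a i j) {b : κ i → ℂ} (hb : b ≠ 0) : Tp F (Function.update a i b) i j := by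
  intro c hc l hl
  rw [Function.update_idem]
  exact par_trans (h.nz ha l) (par_symm (hT b hb l hl)) (hT c hc l hl)

theorem Tp.ne [Nonempty ι] [∀ i, Nontrivial (κ i)] (h : DP Φ Φi F) {a : ∀ i, κ i → ℂ}
    (ha : ∀ i, a i ≠ 0) {i i' j : ι} (hii : i ≠ i') (hT : Tp F a i j) (hT' : Tp F a i' j) :
    False := by
  obtain ⟨c, hc, hn⟩ := exists_not_par (a i) (ha i)
  obtain ⟨c', hc', hn'⟩ := exists_not_par (a i') (ha i')
  have hb := NZ_update ha hc
  have hb' := NZ_update ha hc'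
  obtain ⟨u, hu⟩ := PT_of_par (b := F (Function.update a i' c')) (h.nz hb) j fun l hl =>
    par_trans (h.nz ha l) (par_symm (hT c hc l hl)) (hT' c' hc' l hl)
  have h1 : PT (F (Function.update a i c)) + PT (F (Function.update a i' c')) =
      PT (Function.update (F (Function.update a i c)) j (F (Function.update a i c) j + u)) := by
    rw [PT_update_add, Function.update_eq_self, hu]
  obtain ⟨d, hd⟩ := h.imap (Function.update (F (Function.update a i c)) j
    (F (Function.update a i c) j + u))
  rw [← h1, ← h.map, ← h.map, map_add, h.inv, h.inv] at hd
  obtain ⟨j₀, hj₀⟩ := minors hb hb' hd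
  have e1 : i = j₀ := by
    by_contra hne
    have := hj₀ i hne
    rw [Function.update_self, Function.update_of_ne hii] at this
    exact hn (par_symm this)
  have e2 : i' = j₀ := by
    by_contra hne
    have := hj₀ i' hne
    rw [Function.update_self, Function.update_of_ne hii.symm] at this
    exact hn' this
  exact hii (e1.trans e2.symm)

theorem Tp.eq_of [Nonempty ι] [∀ i, Nontrivial (κ i)] (h : DP Φ Φi F) {a : ∀ i, κ i → ℂ}
    (ha : ∀ i, a i ≠ 0) {i l j j' : ι} (hli : l ≠ i) {b : κ l → ℂ} (hb : b ≠ 0)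
    (hT : Tp F a i j) (hT' : Tp F (Function.update a l b) i j') : j = j' := by
  by_contra hjj
  obtain ⟨p, hp⟩ := Tp.exists h ha l
  have hpj : p ≠ j := by rintro rfl; exact Tp.ne h ha hli hp hT
  have ha' := NZ_update ha hb
  have hpj' : p ≠ j' := by rintro rfl; exact Tp.ne h ha' hli (Tp.stable h ha hp hb) hT'
  obtain ⟨c, hc, hn⟩ := exists_not_par (a i) (ha i)
  have hB := NZ_update ha hc
  have hn' : ¬ par (Function.update a l b i) c := by rwa [Function.update_of_ne hli.symm]
  obtain ⟨j₁, hj₁⟩ := h.L1 hB (i := l) hb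
  have hcomm : Function.update (Function.update a i c) l b =
    Function.update (Function.update a l b) i c := Function.update_comm hli.symm _ _ _
  have hB' := NZ_update ha' hc
  rw [hcomm] at hj₁
  have e1 : j = j₁ := by
    by_contra hne
    apply Tp.not_par h ha hT hc hn
    exact par_trans (h.nz ha' j) (hp b hb j hpj.symm)
      (par_trans (h.nz hB' j) (hT' c hc j hjj) (par_symm (hj₁ j hne)))
  have e2 : j' = j₁ := by
    by_contra hne
    apply Tp.not_par h ha' hT' hc hn'
    exact par_trans (h.nz ha j') (par_symm (hp b hb j' hpj'.symm))
      (par_trans (h.nz hB j') (hT c hc j' (Ne.symm hjj)) (hj₁ j' hne))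
  exact hjj (e1.trans e2.symm)

theorem Tp.update [Nonempty ι] [∀ i, Nontrivial (κ i)] (h : DP Φ Φi F) {a : ∀ i, κ i → ℂ}
    (ha : ∀ i, a i ≠ 0) {i j : ι} (l : ι) {b : κ l → ℂ} (hb : b ≠ 0)
    (hT : Tp F a i j) : Tp F (Function.update a l b) i j := by
  by_cases hl : l = i
  · subst hl; exact Tp.stable h ha hT hb
  · obtain ⟨j', hj'⟩ := Tp.exists h (NZ_update ha hb) i
    rwa [Tp.eq_of h ha hl hb hT hj']

theorem update_induction {p : (∀ i, κ i → ℂ) → Prop} {a b : ∀ i, κ i → ℂ}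
    (ha : ∀ i, a i ≠ 0) (hb : ∀ i, b i ≠ 0) (h0 : p a)
    (hstep : ∀ c : ∀ i, κ i → ℂ, (∀ i, c i ≠ 0) → (∀ i, c i = a i ∨ c i = b i) → p c →
      ∀ l, p (Function.update c l (b l))) :
    p b := by
  have : ∀ s : Finset ι, p (s.piecewise b a) := by
    intro s
    induction s using Finset.induction_on with
    | empty => simpa using h0
    | insert i s hi ih =>
      rw [Finset.piecewise_insert]
      refine hstep _ ?_ ?_ ih i
      · intro l
        by_cases hl : l ∈ s <;> simp [hl, ha, hb]
      · intro l
        by_cases hl : l ∈ s <;> simp [hl]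
  simpa using this Finset.univ

theorem Tp.all [Nonempty ι] [∀ i, Nontrivial (κ i)] (h : DP Φ Φi F) {a b : ∀ i, κ i → ℂ}
    (ha : ∀ i, a i ≠ 0) (hb : ∀ i, b i ≠ 0) {i j : ι} (hT : Tp F a i j) : Tp F b i j :=
  update_induction (p := fun c => Tp F c i j) ha hb hT fun _ hc _ hTc l =>
    Tp.update h hc l (hb l) hTc

theorem exists_perm [Nonempty ι] [∀ i, Nontrivial (κ i)] (h : DP Φ Φi F) :
    ∃ ρ : Equiv.Perm ι, ∀ a : ∀ i, κ i → ℂ, (∀ i, a i ≠ 0) → ∀ i, Tp F a i (ρ.symm i) := by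
  have h1 : ∀ i, (fun _ => 1 : κ i → ℂ) ≠ 0 := fun i =>
    Function.ne_iff.2 ⟨Classical.arbitrary _, by simp⟩
  choose σ hσ using fun i => Tp.exists h h1 i
  have hinj : Function.Injective σ := by
    intro i i' hii
    by_contra hne
    refine Tp.ne h h1 hne (hσ i) ?_
    rw [hii]; exact hσ i'
  let e := Equiv.ofBijective σ (Finite.injective_iff_bijective.1 hinj)
  exact ⟨e.symm, fun a ha i => Tp.all h h1 ha (hσ i)⟩

theorem decomp_form [Nonempty ι] [∀ i, Nontrivial (κ i)] (h : DP Φ Φi F) :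
    ∃ (ρ : Equiv.Perm ι) (f : ∀ j, (κ (ρ j) → ℂ) →ₗ[ℂ] (κ j → ℂ)),
      (∀ j, Function.Injective (f j)) ∧ ∀ a, Φ (PT a) = PT (fun j => f j (a (ρ j))) := by
  obtain ⟨ρ, hρ⟩ := exists_perm h
  let a₀ : ∀ i, κ i → ℂ := fun i _ => 1
  have h1 : ∀ i, a₀ i ≠ 0 := fun i => Function.ne_iff.2 ⟨Classical.arbitrary _, by simp [a₀]⟩
  have ht := h.nz h1
  obtain ⟨x, hx⟩ := exists_pt ht
  have hQ : ∀ j, QT (F a₀) j x ≠ 0 := fun j => Finset.prod_ne_zero_iff.2 fun l _ => hx l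
  let f : ∀ j, (κ (ρ j) → ℂ) →ₗ[ℂ] (κ j → ℂ) := fun j =>
    { toFun := fun c s => Φ (PT (Function.update a₀ (ρ j) c)) (Function.update x j s) /
        QT (F a₀) j x
      map_add' := fun c d => by
        ext s; simp [PT_update_add, add_div]
      map_smul' := fun t c => by
        ext s; simp [PT_update_smul, mul_div_assoc] }
  have hf : ∀ j c u, Φ (PT (Function.update a₀ (ρ j) c)) = PT (Function.update (F a₀) j u) →
      f j c = u := by
    intro j c u hu
    ext s
    change Φ (PT (Function.update a₀ (ρ j) c)) (Function.update x j s) / QT (F a₀) j x = u s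
    rw [hu, PT_update, QT_update', Function.update_self, mul_div_cancel_right₀ _ (hQ j)]
  have hΦ : ∀ j c, Φ (PT (Function.update a₀ (ρ j) c)) = PT (Function.update (F a₀) j (f j c)) := by
    intro j c
    by_cases hc : c = 0
    · subst hc
      have e1 : PT (Function.update a₀ (ρ j) 0) = 0 := by ext x; simp [PT_update]
      have e2 : PT (Function.update (F a₀) j 0) = 0 := by ext x; simp [PT_update]
      rw [map_zero, e1, e2, map_zero]
    · have hT := hρ a₀ h1 (ρ j) c hc
      rw [Equiv.symm_apply_apply] at hT
      obtain ⟨u, hu⟩ := PT_of_par ht j hT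
      rw [← h.map] at hu
      rw [hf j c u hu, hu]
  have hinj : ∀ j, Function.Injective (f j) := by
    intro j
    rw [injective_iff_map_eq_zero]
    intro c hc
    by_contra hc0
    have := hΦ j c
    rw [hc] at this
    have e2 : PT (Function.update (F a₀) j 0) = 0 := by ext x; simp [PT_update]
    rw [e2] at this
    exact PT_ne_zero (NZ_update h1 hc0) (h.inj (by rw [this, map_zero]))
  have hf0 : ∀ j, f j (a₀ (ρ j)) = F a₀ j := by
    intro j
    apply hf
    rw [Function.update_eq_self, Function.update_eq_self, h.map]
  have hpar : ∀ a : ∀ i, κ i → ℂ, (∀ i, a i ≠ 0) → ∀ j, par (f j (a (ρ j))) (F a j) := by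
    intro a ha j
    have hfn : f j (a (ρ j)) ≠ 0 := fun h0 => ha (ρ j) (hinj j (by rw [h0, map_zero]))
    have hb := NZ_update h1 (ha (ρ j))
    refine update_induction (p := fun c => par (f j (a (ρ j))) (F c j)) hb ha ?_ ?_
    · have := hΦ j (a (ρ j))
      rw [h.map] at this
      have h3 := par_PT (h.nz hb) (NZ_update ht hfn) (by rw [this]; exact par_refl _) j
      rw [Function.update_self] at h3
      exact par_symm h3
    · intro c hc hcc hpc l
      by_cases hl : l = ρ j
      · subst hl
        have : c (ρ j) = a (ρ j) := by
          rcases hcc (ρ j) with h | h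
          · simpa using h
          · exact h
        have e : Function.update c (ρ j) (a (ρ j)) = c := by
          rw [← this, Function.update_eq_self]
        rw [e]; exact hpc
      · refine par_trans (h.nz hc j) hpc (hρ c hc l (a l) (ha l) j ?_)
        rintro rfl; simp at hl
  refine ⟨ρ, f, hinj, fun a => ?_⟩
  by_cases ha : ∀ i, a i ≠ 0
  · refine update_induction (p := fun a => Φ (PT a) = PT (fun j => f j (a (ρ j)))) h1 ha ?_ ?_
    · rw [h.map]
      congr 1
      funext j
      exact (hf0 j).symm
    · intro c hc _ hpc l
      obtain ⟨j, rfl⟩ := ρ.surjective l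
      have hh : ∀ d, (fun j' => f j' (Function.update c (ρ j) d (ρ j'))) =
          Function.update (fun j' => f j' (c (ρ j'))) j (f j d) := by
        intro d
        funext j'
        by_cases hj : j' = j
        · subst hj; simp
        · rw [Function.update_of_ne hj, Function.update_of_ne (ρ.injective.ne hj)]
      have hcn : ∀ j', f j' (c (ρ j')) ≠ 0 := fun j' h0 =>
        hc (ρ j') (hinj j' (by rw [h0, map_zero]))
      let G₁ : (κ (ρ j) → ℂ) →ₗ[ℂ] ((∀ i, κ i) → ℂ) :=
        { toFun := fun d => Φ (PT (Function.update c (ρ j) d))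
          map_add' := fun _ _ => by rw [PT_update_add, map_add]
          map_smul' := fun _ _ => by rw [PT_update_smul, map_smul]; rfl }
      let G₂ : (κ (ρ j) → ℂ) →ₗ[ℂ] ((∀ i, κ i) → ℂ) :=
        { toFun := fun d => PT (Function.update (fun j' => f j' (c (ρ j'))) j (f j d))
          map_add' := fun _ _ => by rw [map_add, PT_update_add]
          map_smul' := fun _ _ => by rw [map_smul, PT_update_smul]; rfl }
      have hG₂ : ∀ d, d ≠ 0 → G₂ d ≠ 0 := fun d hd =>
        PT_ne_zero (NZ_update hcn fun h0 => hd (hinj j (by rw [h0, map_zero])))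
      have key := lam_lemma G₁ G₂ ?_ ?_ (c₀ := c (ρ j)) ?_ (hc _) (a (ρ j))
      · rw [hh]; exact key
      · rw [injective_iff_map_eq_zero]
        intro d hd
        by_contra h0
        exact hG₂ d h0 hd
      · intro d
        by_cases hd : d = 0
        · subst hd; exact ⟨0, by simp⟩
        have hup := NZ_update hc hd
        obtain ⟨t, ht⟩ := PT_of_par_all (a := fun j' => f j' (Function.update c (ρ j) d (ρ j')))
          (fun j' h0 => hup (ρ j') (hinj j' (by rw [h0, map_zero]))) (hpar _ hup)
        refine ⟨t, ?_⟩
        change Φ (PT (Function.update c (ρ j) d)) = t • PT (Function.update _ _ _)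
        rw [← hh, ← ht, h.map]
      · change Φ (PT (Function.update c (ρ j) (c (ρ j)))) = PT (Function.update _ _ _)
        rw [Function.update_eq_self, hpc]
        congr 1
        exact (Function.update_eq_self j (fun j' => f j' (c (ρ j')))).symm
  · push Not at ha
    obtain ⟨i, hi⟩ := ha
    obtain ⟨j, rfl⟩ := ρ.surjective i
    have e1 : PT a = 0 := by ext x; rw [PT_eq a (ρ j), hi]; simp
    rw [e1, map_zero]
    ext x
    rw [PT_eq _ j, hi, map_zero]; simp

theorem nsq_PT [∀ i, Fintype (κ i)] (a : ∀ i, κ i → ℂ) : nsq (PT a) = ∏ i, nsq (a i) := by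
  classical
  simp only [nsq, PT, map_prod]
  rw [Finset.prod_univ_sum, Fintype.piFinset_univ]

theorem decomp_iso [Nonempty ι] [∀ i, Nontrivial (κ i)] [∀ i, Fintype (κ i)] (h : DP Φ Φi F)
    (hn : ∀ a, nsq (Φ (PT a)) = nsq (PT a)) :
    ∃ (ρ : Equiv.Perm ι) (f : ∀ j, (κ (ρ j) → ℂ) →ₗ[ℂ] (κ j → ℂ)),
      (∀ j c, nsq (f j c) = nsq c) ∧ ∀ a, Φ (PT a) = PT (fun j => f j (a (ρ j))) := by
  classical
  obtain ⟨ρ, f, hinj, hf⟩ := decomp_form h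
  let e : ∀ i, κ i → ℂ := fun i => Pi.single (Classical.arbitrary _) 1
  have he : ∀ i, nsq (e i) = 1 := fun i => by
    simp [nsq, e, Pi.single_apply, apply_ite Complex.normSq]
  let s : ι → ℝ := fun j => nsq (f j (e (ρ j)))
  have hs : ∀ j, 0 < s j := by
    intro j
    refine lt_of_le_of_ne (nsq_nonneg _) fun h0 => ?_
    have h1 := nsq_eq_zero.1 h0.symm
    have h2 := hinj j (h1.trans (map_zero _).symm)
    have := he (ρ j)
    rw [h2] at this
    simp [nsq] at this
  have hall : ∀ a : ∀ i, κ i → ℂ, ∏ j, nsq (f j (a (ρ j))) = ∏ i, nsq (a i) := by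
    intro a
    have := hn a
    rw [hf, nsq_PT, nsq_PT] at this
    exact this
  have hs1 : ∏ j, s j = 1 := by rw [hall e]; simp [he]
  have hsc : ∀ j c, nsq (f j c) = s j * nsq c := by
    intro j c
    have h1 := hall (Function.update e (ρ j) c)
    rw [← Finset.mul_prod_erase _ _ (Finset.mem_univ j),
      ← Finset.mul_prod_erase _ _ (Finset.mem_univ (ρ j))] at h1
    rw [Function.update_self] at h1
    rw [Finset.prod_congr rfl (g := s) (s₁ := Finset.univ.erase j) (fun l hl => by
        rw [Function.update_of_ne (ρ.injective.ne (Finset.ne_of_mem_erase hl))]),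
      Finset.prod_congr rfl (g := fun _ => (1 : ℝ)) (s₁ := Finset.univ.erase (ρ j)) (fun l hl => by
        rw [Function.update_of_ne (Finset.ne_of_mem_erase hl), he])] at h1
    rw [← Finset.mul_prod_erase _ _ (Finset.mem_univ j)] at hs1
    rw [Finset.prod_const_one, mul_one] at h1
    rw [← h1]
    linear_combination -nsq (f j c) * hs1
  refine ⟨ρ, fun j => (((Real.sqrt (s j))⁻¹ : ℝ) : ℂ) • f j, ?_, ?_⟩
  · intro j c
    rw [LinearMap.smul_apply, nsq_smul, hsc, Complex.normSq_ofReal, ← mul_inv,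
      Real.mul_self_sqrt (hs j).le, ← mul_assoc, inv_mul_cancel₀ (hs j).ne', one_mul]
  · intro a
    rw [hf]
    simp only [LinearMap.smul_apply]
    rw [PT_smul (fun j => (((Real.sqrt (s j))⁻¹ : ℝ) : ℂ)), ← Complex.ofReal_prod,
      Finset.prod_inv_distrib, ← Real.sqrt_prod _ (fun j _ => (hs j).le), hs1]
    simp

end Types


section Spec

theorem unit_of {N : ℕ} (g : (Fin N → ℂ) →ₗ[ℂ] (Fin N → ℂ)) (hg : ∀ c, nsq (g c) = nsq c) :
    ∃ U ∈ unitaryGroup (Fin N) ℂ, ∀ c, g c = U *ᵥ c := by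
  have h0 : ∀ c, vinner (g c) (g c) = vinner c c := fun c => by
    rw [vinner_self, vinner_self, hg]
  have h1 : ∀ x y, vinner (g x) (g y) = vinner x y := by
    intro x y
    have e1 := h0 (x + y)
    have e2 := h0 (x + Complex.I • y)
    have e3 := h0 x
    have e4 := h0 y
    simp only [vinner, map_add, map_smul, star_add, star_smul, add_dotProduct, dotProduct_add,
      smul_dotProduct, dotProduct_smul, smul_eq_mul, Complex.star_def, Complex.conj_I] at e1 e2 e3 e4 ⊢
    have hI : Complex.I * Complex.I = -1 := Complex.I_mul_I
    linear_combination (1 / 2 : ℂ) * e1 - Complex.I / 2 * e2 + (Complex.I / 2 - 1 / 2) * e3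
      + (-1 / 2 + Complex.I / 2 * (-Complex.I * Complex.I)) * e4
      + (1 / 2 : ℂ) * (star (g x) ⬝ᵥ g y - star x ⬝ᵥ y - (star (g y) ⬝ᵥ g x - star y ⬝ᵥ x)) * hI
  refine ⟨LinearMap.toMatrix' g, ?_, fun c => (LinearMap.toMatrix'_mulVec g c).symm⟩
  rw [mem_unitaryGroup_iff', star_eq_conjTranspose]
  ext i j
  have := h1 (Pi.single i 1) (Pi.single j 1)
  simp only [vinner, dotProduct] at this
  simp only [Matrix.mul_apply, conjTranspose_apply, LinearMap.toMatrix'_apply]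
  rw [Matrix.one_apply]
  refine Eq.trans ?_ (this.trans ?_)
  · rfl
  · by_cases hij : i = j
    · subst hij; simp [Pi.single_apply, apply_ite]
    · simp [Pi.single_apply, apply_ite, hij, Ne.symm hij]

/-- The matrix of a product of four vectors. -/
def V4 {A B C D : Type*} (a : A → ℂ) (b : B → ℂ) (c : C → ℂ) (e : D → ℂ) :
    Matrix (A × B) (C × D) ℂ := vecMulVec (prodVec a b) (prodVec c e)

theorem V4_apply {A B C D : Type*} (a : A → ℂ) (b : B → ℂ) (c : C → ℂ) (e : D → ℂ) (p q) :
    V4 a b c e p q = a p.1 * b p.2 * (c q.1 * e q.2) := rfl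

theorem tuple4 {K : Fin 4 → Type*} (a : K 0) (b : K 1) (c : K 2) (e : K 3) :
    ∃ t : ∀ i, K i, t 0 = a ∧ t 1 = b ∧ t 2 = c ∧ t 3 = e :=
  ⟨Fin.cons a (Fin.cons b (Fin.cons c (Fin.cons e (fun i => i.elim0)))), rfl, rfl, rfl, rfl⟩

def eqv4 (K : Fin 4 → Type*) : (∀ i, K i) ≃ (K 0 × K 1) × (K 2 × K 3) where
  toFun x := ((x 0, x 1), (x 2, x 3))
  invFun p := Fin.cons p.1.1 (Fin.cons p.1.2 (Fin.cons p.2.1 (Fin.cons p.2.2 (fun i => i.elim0))))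
  left_inv x := by
    funext i
    fin_cases i <;> rfl
  right_inv p := rfl

def lin4 (K : Fin 4 → Type*) : ((∀ i, K i) → ℂ) ≃ₗ[ℂ] Matrix (K 0 × K 1) (K 2 × K 3) ℂ where
  toFun u := fun p q => u ((eqv4 K).symm (p, q))
  invFun X := fun x => X (eqv4 K x).1 (eqv4 K x).2
  left_inv u := by
    funext x
    simp
  right_inv X := by
    funext p q
    simp
  map_add' _ _ := rfl
  map_smul' _ _ := rfl

theorem lin4_PT (K : Fin 4 → Type*) (a : ∀ i, K i → ℂ) :
    lin4 K (PT a) = V4 (a 0) (a 1) (a 2) (a 3) := by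
  ext p q
  rw [V4_apply]
  change ∏ i, a i ((eqv4 K).symm (p, q) i) = _
  rw [Fin.prod_univ_four, ← mul_assoc]
  rfl

theorem nsqM_lin4 (K : Fin 4 → Type*) [∀ i, Fintype (K i)] (u : (∀ i, K i) → ℂ) :
    nsqM (lin4 K u) = nsq u := by
  rw [nsqM, nsq, ← (eqv4 K).symm.sum_comp]
  exact (Fintype.sum_prod_type (fun i => Complex.normSq (u ((eqv4 K).symm i)))).symm

theorem form4 (K : Fin 4 → Type*) [∀ i, Fintype (K i)] [∀ i, Nontrivial (K i)]
    (Θ Θi : Matrix (K 0 × K 1) (K 2 × K 3) ℂ →ₗ[ℂ] Matrix (K 0 × K 1) (K 2 × K 3) ℂ)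
    (hinv : ∀ X, Θi (Θ X) = X)
    (hΘ : ∀ a b c e, ∃ a' b' c' e', Θ (V4 a b c e) = V4 a' b' c' e')
    (hΘi : ∀ a b c e, ∃ a' b' c' e', Θi (V4 a b c e) = V4 a' b' c' e')
    (hn : ∀ a b c e, nsqM (Θ (V4 a b c e)) = nsqM (V4 a b c e)) :
    ∃ (ρ : Equiv.Perm (Fin 4)) (f : ∀ j, (K (ρ j) → ℂ) →ₗ[ℂ] (K j → ℂ)),
      (∀ j c, nsq (f j c) = nsq c) ∧ ∀ a : ∀ i, K i → ℂ, Θ (V4 (a 0) (a 1) (a 2) (a 3)) =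
        V4 (f 0 (a (ρ 0))) (f 1 (a (ρ 1))) (f 2 (a (ρ 2))) (f 3 (a (ρ 3))) := by
  let L := lin4 K
  let Φ : ((∀ i, K i) → ℂ) →ₗ[ℂ] ((∀ i, K i) → ℂ) := L.symm.toLinearMap ∘ₗ Θ ∘ₗ L.toLinearMap
  let Φi : ((∀ i, K i) → ℂ) →ₗ[ℂ] ((∀ i, K i) → ℂ) := L.symm.toLinearMap ∘ₗ Θi ∘ₗ L.toLinearMap
  have hL : ∀ X : Matrix (K 0 × K 1) (K 2 × K 3) ℂ →ₗ[ℂ] Matrix (K 0 × K 1) (K 2 × K 3) ℂ,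
      (∀ a b c e, ∃ a' b' c' e', X (V4 a b c e) = V4 a' b' c' e') →
      ∀ a, ∃ b, L.symm (X (L (PT a))) = PT b := by
    intro X hX a
    obtain ⟨a', b', c', e', h⟩ := hX (a 0) (a 1) (a 2) (a 3)
    obtain ⟨t, rfl, rfl, rfl, rfl⟩ := tuple4 (K := fun i => K i → ℂ) a' b' c' e'
    refine ⟨t, ?_⟩
    rw [LinearEquiv.symm_apply_eq, lin4_PT, lin4_PT, h]
  choose F hF using hL Θ hΘ
  have hDP : DP Φ Φi F :=
    { inv := fun x => by simp [Φ, Φi, hinv]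
      map := fun a => hF a
      imap := fun a => hL Θi hΘi a }
  obtain ⟨ρ, f, hf, hρ⟩ := decomp_iso hDP (fun a => by
    have h1 : nsqM (L (Φ (PT a))) = nsqM (L (PT a)) := by
      simp only [Φ, LinearMap.comp_apply, LinearEquiv.coe_coe, LinearEquiv.apply_symm_apply]
      rw [lin4_PT]; exact hn _ _ _ _
    rwa [nsqM_lin4, nsqM_lin4] at h1)
  refine ⟨ρ, f, hf, fun a => ?_⟩
  have := congrArg L (hρ a)
  simp only [Φ, LinearMap.comp_apply, LinearEquiv.coe_coe, LinearEquiv.apply_symm_apply] at this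
  rw [lin4_PT, lin4_PT] at this
  exact this

end Spec

section Forms

variable {m n k : ℕ}

abbrev MM (m n : ℕ) := Matrix (Fin m × Fin n) (Fin m × Fin n) ℂ

theorem ext_V4 (F G : MM m n →ₗ[ℂ] MM m n) (h : ∀ a b c e, F (V4 a b c e) = G (V4 a b c e)) :
    F = G := by
  apply Matrix.ext_linearMap
  intro p q
  ext1
  have : Matrix.single p q (1 : ℂ) =
      V4 (Pi.single p.1 1) (Pi.single p.2 1) (Pi.single q.1 1) (Pi.single q.2 1) := by
    ext r s
    obtain ⟨p1, p2⟩ := p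
    obtain ⟨q1, q2⟩ := q
    obtain ⟨r1, r2⟩ := r
    obtain ⟨s1, s2⟩ := s
    rw [V4_apply, Matrix.single_apply]
    simp only [Pi.single_apply, Prod.mk.injEq]
    by_cases h1 : r1 = p1 <;> by_cases h2 : r2 = p2 <;> by_cases h3 : s1 = q1 <;>
      by_cases h4 : s2 = q2 <;> simp_all [eq_comm]
  simp only [LinearMap.comp_apply, singleLinearMap_apply]
  rw [this]
  exact h _ _ _ _

theorem mul_V4_mul (U W : MM m n) (a : Fin m → ℂ) (b : Fin n → ℂ) (c : Fin m → ℂ) (e : Fin n → ℂ) :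
    U * V4 a b c e * Wᵀ = vecMulVec (U *ᵥ prodVec a b) (W *ᵥ prodVec c e) := by
  rw [V4, mul_vecMulVec, vecMulVec_mul, vecMul_transpose]

def ptransL (m n : ℕ) : MM m n →ₗ[ℂ] MM m n where
  toFun := ptrans
  map_add' _ _ := rfl
  map_smul' _ _ := rfl

def transL (m n : ℕ) : MM m n →ₗ[ℂ] MM m n where
  toFun X := Xᵀ
  map_add' _ _ := rfl
  map_smul' _ _ := rfl

/-- realignment -/
def realL (m : ℕ) : MM m m →ₗ[ℂ] MM m m where
  toFun X := ptrans (X * swapMat m m) * swapMat m m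
  map_add' X Y := by simp only [mul_swapMat]; rfl
  map_smul' c X := by simp only [mul_swapMat]; rfl

theorem transL_V4 (a : Fin m → ℂ) (b : Fin n → ℂ) (c : Fin m → ℂ) (e : Fin n → ℂ) :
    transL m n (V4 a b c e) = V4 c e a b := by
  ext p q; change V4 a b c e q p = _; simp only [V4_apply]; ring

theorem ptransL_V4 (a : Fin m → ℂ) (b : Fin n → ℂ) (c : Fin m → ℂ) (e : Fin n → ℂ) :
    ptransL m n (V4 a b c e) = V4 a e c b := by
  ext p q; change V4 a b c e (p.1, q.2) (q.1, p.2) = _; simp only [V4_apply]; ring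

theorem realL_V4 (a b c e : Fin m → ℂ) :
    realL m (V4 a b c e) = V4 a c b e := by
  ext p q
  change (ptrans (V4 a b c e * swapMat m m) * swapMat m m) p q = _
  rw [mul_swapMat, mul_swapMat]
  change V4 a b c e (p.1, q.1) (p.2, q.2) = _
  simp only [V4_apply]; ring

theorem isComp_id : IsIsoComp m n k (LinearMap.id : MM m n →ₗ[ℂ] MM m n) := by
  have := IsIsoComp.base (k := k) _ (IsIsoGen.unitary (1 : MM m n) 1 (IsLocalUnitary.one m n)
    (IsLocalUnitary.one m n))
  convert this using 1
  funext X; simp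

theorem isComp_trans {R : MM m n →ₗ[ℂ] MM m n} (h : IsIsoComp m n k R) :
    IsIsoComp m n k (transL m n ∘ₗ R) :=
  IsIsoComp.comp (fun X => Xᵀ) R (IsIsoComp.base _ IsIsoGen.transpose) h

theorem isComp_ptrans : IsIsoComp m n 1 (ptransL m n) :=
  IsIsoComp.base _ (IsIsoGen.ptranspose rfl)

theorem isComp_real : IsIsoComp m m 1 (realL m) := by
  have hs : IsIsoComp m m 1 (fun X => 1 * X * swapMat m m) :=
    IsIsoComp.base _ (IsIsoGen.unitary _ _ (IsLocalUnitary.one m m) (IsLocalUnitary.swap m))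
  have := IsIsoComp.comp _ _ hs (IsIsoComp.comp _ _ (IsIsoComp.base _ (IsIsoGen.ptranspose rfl)) hs)
  convert this using 1
  funext X
  simp [realL]

/-- `R` maps some element of `Cset 2` to a matrix of rank at least 2. -/
def Bad (R : MM m n →ₗ[ℂ] MM m n) : Prop :=
  ∃ T ∈ Cset (Fin m) (Fin n) 2, ∃ p p' q q', R T p q * R T p' q' ≠ R T p q' * R T p' q

theorem Bad.trans {R : MM m n →ₗ[ℂ] MM m n} (h : Bad R) : Bad (transL m n ∘ₗ R) := by
  obtain ⟨T, hT, p, p', q, q', h⟩ := h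
  refine ⟨T, hT, q, q', p, p', ?_⟩
  change R T p q * R T p' q' ≠ R T p' q * R T p q'
  rwa [mul_comm (R T p' q)]

def TT (m n : ℕ) (i i' : Fin m) (j j' : Fin n) : MM m n :=
  V4 (Pi.single i 1) (Pi.single j 1) (Pi.single i 1) (Pi.single j 1) +
  V4 (Pi.single i' 1) (Pi.single j' 1) (Pi.single i 1) (Pi.single j 1)

theorem TT_mem (i i' : Fin m) (j j' : Fin n) : TT m n i i' j j' ∈ Cset (Fin m) (Fin n) 2 := by
  refine ⟨prodVec (Pi.single i 1) (Pi.single j 1) + prodVec (Pi.single i' 1) (Pi.single j' 1),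
    prodVec (Pi.single i 1) (Pi.single j 1), ?_, ?_, ?_⟩
  · exact SR_add (j := 1) (k := 1) (SR_one_iff.2 ⟨_, _, rfl⟩) (SR_one_iff.2 ⟨_, _, rfl⟩)
  · exact SR_mono (by norm_num) (SR_one_iff.2 ⟨_, _, rfl⟩)
  · rw [TT, V4, V4, add_vecMulVec]

theorem bad_ptrans (hm : 2 ≤ m) (hn : 2 ≤ n) : Bad (ptransL m n) := by
  let i : Fin m := ⟨0, by omega⟩
  let i' : Fin m := ⟨1, by omega⟩
  let j : Fin n := ⟨0, by omega⟩
  let j' : Fin n := ⟨1, by omega⟩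
  have h1 : i ≠ i' := by simp [i, i', Fin.ext_iff]
  have h2 : j ≠ j' := by simp [j, j', Fin.ext_iff]
  refine ⟨TT m n i i' j j', TT_mem _ _ _ _, (i, j), (i', j), (i, j), (i, j'), ?_⟩
  rw [TT, map_add, ptransL_V4, ptransL_V4]
  simp [V4_apply, h1, h2, h1.symm, h2.symm]

theorem bad_real (hm : 2 ≤ m) : Bad (realL m) := by
  let i : Fin m := ⟨0, by omega⟩
  let i' : Fin m := ⟨1, by omega⟩
  have h1 : i ≠ i' := by simp [i, i', Fin.ext_iff]
  refine ⟨TT m m i i' i i', TT_mem _ _ _ _, (i, i), (i', i), (i, i), (i', i), ?_⟩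
  rw [TT, map_add, realL_V4, realL_V4]
  simp [V4_apply, h1, h1.symm]

theorem conclude {Θ R : MM m n →ₗ[ℂ] MM m n}
    (hΘ : ∀ X ∈ Cset (Fin m) (Fin n) k, Θ X ∈ Cset (Fin m) (Fin n) k)
    (hR : IsIsoComp m n k R ∨ (2 ≤ k ∧ Bad R)) {U W : MM m n}
    (hU : IsLocalUnitary m n U) (hW : IsLocalUnitary m n W)
    (h : ∀ a b c e, Θ (V4 a b c e) = U * R (V4 a b c e) * Wᵀ) : IsIsoComp m n k Θ := by
  have hall : ∀ X, Θ X = U * R X * Wᵀ := by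
    let G : MM m n →ₗ[ℂ] MM m n :=
      { toFun := fun X => U * R X * Wᵀ
        map_add' := fun X Y => by rw [map_add, mul_add, add_mul]
        map_smul' := fun c X => by simp }
    intro X
    exact LinearMap.congr_fun (ext_V4 Θ G h) X
  rcases hR with hR | ⟨hk, T, hT, p, p', q, q', hne⟩
  · have := IsIsoComp.comp _ _ (IsIsoComp.base _ (IsIsoGen.unitary (k := k) U Wᵀ hU hW.transpose)) hR
    convert this using 1
    funext X
    exact hall X
  · exfalso
    apply hne
    obtain ⟨v, w, -, -, hvw⟩ := hΘ T (Cset_mono hk hT)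
    have e1 : R T = Uᴴ * (U * R T * Wᵀ) * (Wᵀ)ᴴ := by
      have h1 := hU.mul_self
      have h2 := hW.transpose.self_mul
      calc R T = (Uᴴ * U) * R T * (Wᵀ * (Wᵀ)ᴴ) := by rw [h1, h2, one_mul, mul_one]
        _ = _ := by simp only [Matrix.mul_assoc]
    rw [← hall, hvw, mul_vecMulVec, vecMulVec_mul] at e1
    rw [e1]
    simp only [vecMulVec_apply]
    ring

theorem pair_same {U₁ : Matrix (Fin m) (Fin m) ℂ} {U₂ : Matrix (Fin n) (Fin n) ℂ}
    (h1 : U₁ ∈ unitaryGroup (Fin m) ℂ) (h2 : U₂ ∈ unitaryGroup (Fin n) ℂ) :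
    ∃ U, IsLocalUnitary m n U ∧ ∀ a b, prodVec (U₁ *ᵥ a) (U₂ *ᵥ b) = U *ᵥ prodVec a b :=
  ⟨U₁ ⊗ₖ U₂, Or.inl ⟨U₁, h1, U₂, h2, rfl⟩, fun a b => (kron_mulVec_prodVec U₁ U₂ a b).symm⟩

theorem pair_swap {U₁ U₂ : Matrix (Fin m) (Fin m) ℂ}
    (h1 : U₁ ∈ unitaryGroup (Fin m) ℂ) (h2 : U₂ ∈ unitaryGroup (Fin m) ℂ) :
    ∃ U, IsLocalUnitary m m U ∧ ∀ a b, prodVec (U₁ *ᵥ b) (U₂ *ᵥ a) = U *ᵥ prodVec a b :=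
  ⟨swapMat m m * (U₂ ⊗ₖ U₁), Or.inr ⟨rfl, U₂, h2, U₁, h1, rfl⟩, fun a b => by
    rw [← mulVec_mulVec, kron_mulVec_prodVec, swap_mulVec_prodVec]⟩

/-- The pair of slots `r₀ r₁` is `{i, j}`; then the pair of images is a local unitary image. -/
theorem pair_form {U₁ U₂ : Matrix (Fin m) (Fin m) ℂ}
    (h1 : U₁ ∈ unitaryGroup (Fin m) ℂ) (h2 : U₂ ∈ unitaryGroup (Fin m) ℂ) {r₀ r₁ i j : Fin 4}
    (h : (r₀ = i ∧ r₁ = j) ∨ (r₀ = j ∧ r₁ = i)) :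
    ∃ U, IsLocalUnitary m m U ∧ ∀ a : Fin 4 → Fin m → ℂ,
      prodVec (U₁ *ᵥ a r₀) (U₂ *ᵥ a r₁) = U *ᵥ prodVec (a i) (a j) := by
  rcases h with ⟨rfl, rfl⟩ | ⟨rfl, rfl⟩
  · obtain ⟨U, hU, h⟩ := pair_same h1 h2
    exact ⟨U, hU, fun a => h _ _⟩
  · obtain ⟨U, hU, h⟩ := pair_swap h1 h2
    exact ⟨U, hU, fun a => h _ _⟩

def isPair (r₀ r₁ i j : Fin 4) : Prop := (r₀ = i ∧ r₁ = j) ∨ (r₀ = j ∧ r₁ = i)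

instance (r₀ r₁ i j : Fin 4) : Decidable (isPair r₀ r₁ i j) := by unfold isPair; infer_instance

theorem perm_cases : ∀ r₀ r₁ r₂ r₃ : Fin 4,
    (r₀ ≠ r₁ ∧ r₀ ≠ r₂ ∧ r₀ ≠ r₃ ∧ r₁ ≠ r₂ ∧ r₁ ≠ r₃ ∧ r₂ ≠ r₃) →
    (isPair r₀ r₁ 0 1 ∧ isPair r₂ r₃ 2 3) ∨ (isPair r₀ r₁ 2 3 ∧ isPair r₂ r₃ 0 1) ∨
    (isPair r₀ r₁ 0 3 ∧ isPair r₂ r₃ 2 1) ∨ (isPair r₀ r₁ 2 1 ∧ isPair r₂ r₃ 0 3) ∨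
    (isPair r₀ r₁ 0 2 ∧ isPair r₂ r₃ 1 3) ∨ (isPair r₀ r₁ 1 3 ∧ isPair r₂ r₃ 0 2) := by
  decide

theorem V4_of_Cset {X : MM m n} (hX : X ∈ Cset (Fin m) (Fin n) 1) :
    ∃ a b c e, X = V4 a b c e := by
  obtain ⟨v, w, hv, hw, rfl⟩ := hX
  obtain ⟨a, b, rfl⟩ := SR_one_iff.1 hv
  obtain ⟨c, e, rfl⟩ := SR_one_iff.1 hw
  exact ⟨a, b, c, e, rfl⟩

theorem V4_mem_Cset (a : Fin m → ℂ) (b : Fin n → ℂ) (c : Fin m → ℂ) (e : Fin n → ℂ) :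
    V4 a b c e ∈ Cset (Fin m) (Fin n) 1 :=
  ⟨_, _, SR_one_iff.2 ⟨a, b, rfl⟩, SR_one_iff.2 ⟨c, e, rfl⟩, rfl⟩

end Forms


section Classify

variable {m n k : ℕ}

theorem cast_f {K : Fin 4 → Type*} [∀ i, Fintype (K i)] {J : Type*} [Fintype J] {r i : Fin 4}
    (hr : r = i) (f : (K r → ℂ) →ₗ[ℂ] (J → ℂ)) (hf : ∀ c, nsq (f c) = nsq c) :
    ∃ g : (K i → ℂ) →ₗ[ℂ] (J → ℂ), (∀ c, nsq (g c) = nsq c) ∧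
      ∀ a : ∀ i, K i → ℂ, f (a r) = g (a i) := by
  subst hr; exact ⟨f, hf, fun _ => rfl⟩

def d4 (m n : ℕ) : Fin 4 → ℕ := ![m, n, m, n]

theorem classify_eq (hk1 : 1 ≤ k) (hm : 2 ≤ m) (Θ Θi : MM m m →ₗ[ℂ] MM m m)
    (hinv : ∀ X, Θi (Θ X) = X)
    (hC : ∀ X ∈ Cset (Fin m) (Fin m) k, Θ X ∈ Cset (Fin m) (Fin m) k)
    (hΘ : ∀ a b c e, ∃ a' b' c' e', Θ (V4 a b c e) = V4 a' b' c' e')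
    (hΘi : ∀ a b c e, ∃ a' b' c' e', Θi (V4 a b c e) = V4 a' b' c' e')
    (hn : ∀ a b c e, nsqM (Θ (V4 a b c e)) = nsqM (V4 a b c e)) : IsIsoComp m m k Θ := by
  haveI : Nontrivial (Fin m) := Fin.nontrivial_iff_two_le.2 hm
  obtain ⟨ρ, f, hf, hρ⟩ := form4 (fun _ => Fin m) Θ Θi hinv hΘ hΘi hn
  choose U hU hUe using fun j => unit_of (f j) (hf j)
  have h : ∀ a b c e : Fin m → ℂ, ∀ A : Fin 4 → Fin m → ℂ, A = ![a, b, c, e] →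
      Θ (V4 a b c e) = vecMulVec (prodVec (U 0 *ᵥ A (ρ 0)) (U 1 *ᵥ A (ρ 1)))
        (prodVec (U 2 *ᵥ A (ρ 2)) (U 3 *ᵥ A (ρ 3))) := by
    intro a b c e A hA
    have := hρ A
    simp only [hUe] at this
    subst hA
    exact this
  have hne : ∀ i j : Fin 4, i ≠ j → ρ i ≠ ρ j := fun i j hij => ρ.injective.ne hij
  have hp : IsIsoComp m m k (ptransL m m) ∨ (2 ≤ k ∧ Bad (ptransL m m)) := by
    rcases hk1.eq_or_lt with rfl | hk
    · exact Or.inl isComp_ptrans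
    · exact Or.inr ⟨hk, bad_ptrans hm hm⟩
  have hr : IsIsoComp m m k (realL m) ∨ (2 ≤ k ∧ Bad (realL m)) := by
    rcases hk1.eq_or_lt with rfl | hk
    · exact Or.inl isComp_real
    · exact Or.inr ⟨hk, bad_real hm⟩
  have ht : ∀ R : MM m m →ₗ[ℂ] MM m m, IsIsoComp m m k R ∨ (2 ≤ k ∧ Bad R) →
      IsIsoComp m m k (transL m m ∘ₗ R) ∨ (2 ≤ k ∧ Bad (transL m m ∘ₗ R)) := by
    intro R hR
    exact hR.imp isComp_trans (fun h => ⟨h.1, h.2.trans⟩)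
  have hid : IsIsoComp m m k (LinearMap.id : MM m m →ₗ[ℂ] MM m m) ∨
      (2 ≤ k ∧ Bad (LinearMap.id : MM m m →ₗ[ℂ] MM m m)) := Or.inl isComp_id
  have fin : ∀ (R : MM m m →ₗ[ℂ] MM m m) (i j i' j' : Fin 4),
      IsIsoComp m m k R ∨ (2 ≤ k ∧ Bad R) →
      isPair (ρ 0) (ρ 1) i j → isPair (ρ 2) (ρ 3) i' j' →
      (∀ a b c e, R (V4 a b c e) = V4 (![a, b, c, e] i) (![a, b, c, e] j)
        (![a, b, c, e] i') (![a, b, c, e] j')) → IsIsoComp m m k Θ := by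
    intro R i j i' j' hR h1 h2 h3
    obtain ⟨P, hP, hPe⟩ := pair_form (hU 0) (hU 1) h1
    obtain ⟨Q, hQ, hQe⟩ := pair_form (hU 2) (hU 3) h2
    refine conclude hC hR hP hQ fun a b c e => ?_
    rw [h a b c e _ rfl, h3, mul_V4_mul, hPe, hQe]
  rcases perm_cases (ρ 0) (ρ 1) (ρ 2) (ρ 3) ⟨hne _ _ (by decide), hne _ _ (by decide),
    hne _ _ (by decide), hne _ _ (by decide), hne _ _ (by decide), hne _ _ (by decide)⟩ with
    ⟨h1, h2⟩ | ⟨h1, h2⟩ | ⟨h1, h2⟩ | ⟨h1, h2⟩ | ⟨h1, h2⟩ | ⟨h1, h2⟩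
  · exact fin _ _ _ _ _ hid h1 h2 fun a b c e => rfl
  · exact fin _ _ _ _ _ (ht _ hid) h1 h2 fun a b c e => transL_V4 a b c e
  · exact fin _ _ _ _ _ hp h1 h2 fun a b c e => ptransL_V4 a b c e
  · refine fin _ _ _ _ _ (ht _ hp) h1 h2 fun a b c e => ?_
    rw [LinearMap.comp_apply, ptransL_V4, transL_V4]; rfl
  · exact fin _ _ _ _ _ hr h1 h2 fun a b c e => realL_V4 a b c e
  · refine fin _ _ _ _ _ (ht _ hr) h1 h2 fun a b c e => ?_
    rw [LinearMap.comp_apply, realL_V4, transL_V4]; rfl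

theorem d4_cases : ∀ r : Fin 4, ∀ m n : ℕ, (d4 m n r = m ∧ (r = 0 ∨ r = 2)) ∨
    (d4 m n r = n ∧ (r = 1 ∨ r = 3)) := by
  intro r m n
  fin_cases r <;> simp [d4]

theorem classify_ne (hmn : m ≠ n) (hk1 : 1 ≤ k) (hm : 2 ≤ m) (hn2 : 2 ≤ n)
    (Θ Θi : MM m n →ₗ[ℂ] MM m n)
    (hinv : ∀ X, Θi (Θ X) = X)
    (hC : ∀ X ∈ Cset (Fin m) (Fin n) k, Θ X ∈ Cset (Fin m) (Fin n) k)
    (hΘ : ∀ a b c e, ∃ a' b' c' e', Θ (V4 a b c e) = V4 a' b' c' e')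
    (hΘi : ∀ a b c e, ∃ a' b' c' e', Θi (V4 a b c e) = V4 a' b' c' e')
    (hn : ∀ a b c e, nsqM (Θ (V4 a b c e)) = nsqM (V4 a b c e)) : IsIsoComp m n k Θ := by
  haveI : ∀ i, Nontrivial (Fin (d4 m n i)) := by
    intro i
    rw [Fin.nontrivial_iff_two_le]
    rcases d4_cases i m n with h | h <;> omega
  obtain ⟨ρ, f, hf, hρ⟩ := form4 (fun i => Fin (d4 m n i)) Θ Θi hinv hΘ hΘi hn
  have hle : ∀ j, d4 m n (ρ j) ≤ d4 m n j := by
    intro j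
    have hinj : Function.Injective (f j) := by
      rw [injective_iff_map_eq_zero]
      intro c hc
      have := hf j c
      rw [hc] at this
      apply nsq_eq_zero.1
      rw [← this]; simp [nsq]
    simpa using LinearMap.finrank_le_finrank_of_injective hinj
  have heq : ∀ j, d4 m n (ρ j) = d4 m n j := by
    have := (Finset.sum_eq_sum_iff_of_le (s := Finset.univ) (fun j _ => hle j)).1
      (Equiv.sum_comp ρ (d4 m n))
    exact fun j => this j (Finset.mem_univ j)
  have hp : IsIsoComp m n k (ptransL m n) ∨ (2 ≤ k ∧ Bad (ptransL m n)) := by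
    rcases hk1.eq_or_lt with rfl | hk
    · exact Or.inl isComp_ptrans
    · exact Or.inr ⟨hk, bad_ptrans hm hn2⟩
  have ht : ∀ R : MM m n →ₗ[ℂ] MM m n, IsIsoComp m n k R ∨ (2 ≤ k ∧ Bad R) →
      IsIsoComp m n k (transL m n ∘ₗ R) ∨ (2 ≤ k ∧ Bad (transL m n ∘ₗ R)) := by
    intro R hR
    exact hR.imp isComp_trans (fun h => ⟨h.1, h.2.trans⟩)
  have hid : IsIsoComp m n k (LinearMap.id : MM m n →ₗ[ℂ] MM m n) ∨
      (2 ≤ k ∧ Bad (LinearMap.id : MM m n →ₗ[ℂ] MM m n)) := Or.inl isComp_id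
  have hfin : ∀ (R : MM m n →ₗ[ℂ] MM m n), IsIsoComp m n k R ∨ (2 ≤ k ∧ Bad R) →
      ∀ (g₀ g₂ : (Fin m → ℂ) →ₗ[ℂ] (Fin m → ℂ)) (g₁ g₃ : (Fin n → ℂ) →ₗ[ℂ] (Fin n → ℂ)),
      (∀ c, nsq (g₀ c) = nsq c) → (∀ c, nsq (g₁ c) = nsq c) → (∀ c, nsq (g₂ c) = nsq c) →
      (∀ c, nsq (g₃ c) = nsq c) →
      (∀ a b c e, ∃ a' b' c' e', R (V4 a b c e) = V4 a' b' c' e' ∧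
        Θ (V4 a b c e) = V4 (g₀ a') (g₁ b') (g₂ c') (g₃ e')) → IsIsoComp m n k Θ := by
    intro R hR g₀ g₂ g₁ g₃ h0 h1 h2 h3 h
    obtain ⟨U₀, hU₀, e₀⟩ := unit_of g₀ h0
    obtain ⟨U₁, hU₁, e₁⟩ := unit_of g₁ h1
    obtain ⟨U₂, hU₂, e₂⟩ := unit_of g₂ h2
    obtain ⟨U₃, hU₃, e₃⟩ := unit_of g₃ h3
    obtain ⟨P, hP, hPe⟩ := pair_same hU₀ hU₁
    obtain ⟨Q, hQ, hQe⟩ := pair_same hU₂ hU₃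
    refine conclude hC hR hP hQ fun a b c e => ?_
    obtain ⟨a', b', c', e', h4, h5⟩ := h a b c e
    rw [h4, h5, mul_V4_mul, V4, e₀, e₁, e₂, e₃, hPe, hQe]
  have h0 : ρ 0 = 0 ∨ ρ 0 = 2 := by
    have h := heq 0
    rcases d4_cases (ρ 0) m n with h' | h'
    · exact h'.2
    · exact absurd (h.symm.trans h'.1) hmn
  have h2 : ρ 2 = 0 ∨ ρ 2 = 2 := by
    have h := heq 2
    rcases d4_cases (ρ 2) m n with h' | h'
    · exact h'.2
    · exact absurd (h.symm.trans h'.1) hmn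
  have h1 : ρ 1 = 1 ∨ ρ 1 = 3 := by
    have h := heq 1
    rcases d4_cases (ρ 1) m n with h' | h'
    · exact absurd (h'.1.symm.trans h) hmn
    · exact h'.2
  have h3 : ρ 3 = 1 ∨ ρ 3 = 3 := by
    have h := heq 3
    rcases d4_cases (ρ 3) m n with h' | h'
    · exact absurd (h'.1.symm.trans h) hmn
    · exact h'.2
  have n02 : ρ 0 ≠ ρ 2 := ρ.injective.ne (by decide)
  have n13 : ρ 1 ≠ ρ 3 := ρ.injective.ne (by decide)
  have h02 : (ρ 0 = 0 ∧ ρ 2 = 2) ∨ (ρ 0 = 2 ∧ ρ 2 = 0) := by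
    rcases h0 with h0 | h0 <;> rcases h2 with h2 | h2 <;> simp_all
  have h13 : (ρ 1 = 1 ∧ ρ 3 = 3) ∨ (ρ 1 = 3 ∧ ρ 3 = 1) := by
    rcases h1 with h1 | h1 <;> rcases h3 with h3 | h3 <;> simp_all
  have key : ∀ (R : MM m n →ₗ[ℂ] MM m n), IsIsoComp m n k R ∨ (2 ≤ k ∧ Bad R) →
      ∀ (g₀ : (Fin m → ℂ) →ₗ[ℂ] (Fin m → ℂ)) (g₁ : (Fin n → ℂ) →ₗ[ℂ] (Fin n → ℂ))
        (g₂ : (Fin m → ℂ) →ₗ[ℂ] (Fin m → ℂ)) (g₃ : (Fin n → ℂ) →ₗ[ℂ] (Fin n → ℂ)),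
      (∀ c, nsq (g₀ c) = nsq c) → (∀ c, nsq (g₁ c) = nsq c) → (∀ c, nsq (g₂ c) = nsq c) →
      (∀ c, nsq (g₃ c) = nsq c) →
      (∀ A : ∀ i, Fin (d4 m n i) → ℂ, ∃ a' b' c' e', R (V4 (A 0) (A 1) (A 2) (A 3)) = V4 a' b' c' e' ∧
        f 0 (A (ρ 0)) = g₀ a' ∧ f 1 (A (ρ 1)) = g₁ b' ∧ f 2 (A (ρ 2)) = g₂ c' ∧
        f 3 (A (ρ 3)) = g₃ e') → IsIsoComp m n k Θ := by
    intro R hR g₀ g₁ g₂ g₃ q0 q1 q2 q3 h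
    refine hfin R hR g₀ g₂ g₁ g₃ q0 q1 q2 q3 fun a b c e => ?_
    obtain ⟨A, rfl, rfl, rfl, rfl⟩ := tuple4 (K := fun i => Fin (d4 m n i) → ℂ) a b c e
    obtain ⟨a', b', c', e', r, r0, r1, r2, r3⟩ := h A
    refine ⟨a', b', c', e', r, ?_⟩
    rw [← r0, ← r1, ← r2, ← r3]
    exact hρ A
  rcases h02 with ⟨p0, p2⟩ | ⟨p0, p2⟩ <;> rcases h13 with ⟨p1, p3⟩ | ⟨p1, p3⟩ <;>
  obtain ⟨g₀, q0, r0⟩ := cast_f (K := fun i => Fin (d4 m n i)) p0 (f 0) (hf 0) <;>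
  obtain ⟨g₁, q1, r1⟩ := cast_f (K := fun i => Fin (d4 m n i)) p1 (f 1) (hf 1) <;>
  obtain ⟨g₂, q2, r2⟩ := cast_f (K := fun i => Fin (d4 m n i)) p2 (f 2) (hf 2) <;>
  obtain ⟨g₃, q3, r3⟩ := cast_f (K := fun i => Fin (d4 m n i)) p3 (f 3) (hf 3)
  · exact key _ hid g₀ g₁ g₂ g₃ q0 q1 q2 q3 fun A => ⟨A 0, A 1, A 2, A 3, rfl, r0 A, r1 A, r2 A, r3 A⟩
  · exact key _ hp g₀ g₁ g₂ g₃ q0 q1 q2 q3 fun A => ⟨A 0, A 3, A 2, A 1, ptransL_V4 _ _ _ _,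
      r0 A, r1 A, r2 A, r3 A⟩
  · exact key _ (ht _ hp) g₀ g₁ g₂ g₃ q0 q1 q2 q3 fun A => ⟨A 2, A 1, A 0, A 3, by
      rw [LinearMap.comp_apply]
      erw [ptransL_V4, transL_V4], r0 A, r1 A, r2 A, r3 A⟩
  · exact key _ (ht _ hid) g₀ g₁ g₂ g₃ q0 q1 q2 q3 fun A => ⟨A 2, A 3, A 0, A 1, transL_V4 _ _ _ _,
      r0 A, r1 A, r2 A, r3 A⟩

theorem classify (hk1 : 1 ≤ k) (hk : k < min m n) (Θ Θi : MM m n →ₗ[ℂ] MM m n)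
    (hinv : ∀ X, Θi (Θ X) = X) (hinv' : ∀ X, Θ (Θi X) = X)
    (hG : ∀ g ∈ Gset (Fin m) (Fin n) k, Θ g ∈ Gset (Fin m) (Fin n) k)
    (hGi : ∀ g ∈ Gset (Fin m) (Fin n) k, Θi g ∈ Gset (Fin m) (Fin n) k) : IsIsoComp m n k Θ := by
  have hkm : k < Fintype.card (Fin m) := by simp; omega
  have hkn : k < Fintype.card (Fin n) := by simp; omega
  have h1 := Cset_of_Gset Θ hG
  have h2 := Cset_of_Gset Θi hGi
  have d1 := descent_le hkm hkn Θ (Function.LeftInverse.injective hinv) (fun X hX => (h1 X hX).1) hk1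
  have d2 := descent_le hkm hkn Θi (Function.LeftInverse.injective hinv') (fun X hX => (h2 X hX).1) hk1
  have e1 : ∀ a b c e, ∃ a' b' c' e', Θ (V4 a b c e) = V4 a' b' c' e' :=
    fun a b c e => V4_of_Cset (d1 _ (V4_mem_Cset a b c e))
  have e2 : ∀ a b c e, ∃ a' b' c' e', Θi (V4 a b c e) = V4 a' b' c' e' :=
    fun a b c e => V4_of_Cset (d2 _ (V4_mem_Cset a b c e))
  have e3 : ∀ a b c e, nsqM (Θ (V4 a b c e)) = nsqM (V4 a b c e) :=
    fun a b c e => (h1 _ (Cset_mono hk1 (V4_mem_Cset a b c e))).2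
  by_cases hmn : m = n
  · subst hmn
    exact classify_eq hk1 (by omega) Θ Θi hinv (fun X hX => (h1 X hX).1) e1 e2 e3
  · exact classify_ne hmn hk1 (by omega) (by omega) Θ Θi hinv (fun X hX => (h1 X hX).1) e1 e2 e3

end Classify


theorem inv_of_inj {m n : ℕ} (Φ : MM m n →ₗ[ℂ] MM m n) (h : ∀ X, Φ X = 0 → X = 0) :
    ∃ Φi : MM m n →ₗ[ℂ] MM m n, (∀ X, Φi (Φ X) = X) ∧ (∀ X, Φ (Φi X) = X) := by
  have hinj : Function.Injective Φ := (injective_iff_map_eq_zero Φ).2 h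
  let e := LinearEquiv.ofInjectiveEndo Φ hinj
  have he : ∀ X, e X = Φ X := fun X => rfl
  refine ⟨e.symm.toLinearMap, fun X => ?_, fun X => ?_⟩
  · rw [← he]; simp
  · rw [← he]; simp

theorem hsAdj_inv {m n : ℕ} {Φ Φi : MM m n →ₗ[ℂ] MM m n} (h : ∀ X, Φi (Φ X) = X) (X : MM m n) :
    hsAdj Φ (hsAdj Φi X) = X := by
  refine hs_ext_left fun Y => ?_
  rw [hs_hsAdj', hs_hsAdj', h]

theorem iso_of_adj {m n k : ℕ} (Φ : MM m n →ₗ[ℂ] MM m n) (h : IsIsoComp m n k (hsAdj Φ)) :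
    IsIsoComp m n k Φ := by
  obtain ⟨F, F', hF, hF', h1, h2, h3, h4⟩ := h.props
  have : ⇑F' = ⇑Φ := by
    funext X
    refine hs_ext_left fun Y => ?_
    rw [hs_symm, ← h3, hF, hs_hsAdj', ← hs_symm]
  rw [← this]; exact hF'

theorem iso_of_Sk {m n k : ℕ} (hk1 : 1 ≤ k) (hk : k < min m n) (Φ : MM m n →ₗ[ℂ] MM m n)
    (h : ∀ X, SkNorm k (Φ X) = SkNorm k X) : IsIsoComp m n k Φ := by
  haveI : Nonempty (Fin m) := ⟨⟨0, by have := min_le_left m n; omega⟩⟩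
  haveI : Nonempty (Fin n) := ⟨⟨0, by have := min_le_right m n; omega⟩⟩
  have h0 : SkNorm k (0 : MM m n) = 0 := by
    obtain ⟨g, hg, h⟩ := SkNorm_att hk1 (0 : MM m n)
    rw [h]; simp [hs]
  obtain ⟨Φi, hi1, hi2⟩ := inv_of_inj Φ fun X hX => eq_zero_of_SkNorm hk1 (by rw [← h, hX, h0])
  have hi : ∀ X, SkNorm k (Φi X) = SkNorm k X := fun X => by rw [← h, hi2]
  refine iso_of_adj Φ ?_
  exact classify hk1 hk (hsAdj Φ) (hsAdj Φi) (hsAdj_inv hi2) (hsAdj_inv hi1)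
    (fun g hg => adj_mem_Gset hk1 Φi (hsAdj Φ) (hsAdj Φi) hi (fun X Y => hs_hsAdj' Φi X Y)
      (hsAdj_inv hi1) hg)
    (fun g hg => adj_mem_Gset hk1 Φ (hsAdj Φi) (hsAdj Φ) h (fun X Y => hs_hsAdj' Φ X Y)
      (hsAdj_inv hi2) hg)

theorem gammaNorm_zero {m n k : ℕ} : gammaNorm k (0 : MM m n) = 0 := by
  rw [gammaNorm_eq]
  have h0 : (0 : ℝ) ∈ gamSet k (0 : MM m n) := by
    refine ⟨0, Fin.elim0, Fin.elim0, fun i => i.elim0, by simp, by simp⟩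
  exact le_antisymm (csInf_le (gamSet_bdd _ _) h0) (le_csInf ⟨0, h0⟩ fun r hr => gamSet_nonneg hr)

theorem iso_of_gamma {m n k : ℕ} (hk1 : 1 ≤ k) (hk : k < min m n) (Φ : MM m n →ₗ[ℂ] MM m n)
    (h : ∀ X, gammaNorm k (Φ X) = gammaNorm k X) : IsIsoComp m n k Φ := by
  haveI : Nonempty (Fin m) := ⟨⟨0, by have := min_le_left m n; omega⟩⟩
  haveI : Nonempty (Fin n) := ⟨⟨0, by have := min_le_right m n; omega⟩⟩
  obtain ⟨Φi, hi1, hi2⟩ := inv_of_inj Φ fun X hX =>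
    eq_zero_of_gammaNorm hk1 (by rw [← h, hX, gammaNorm_zero])
  have hi : ∀ X, gammaNorm k (Φi X) = gammaNorm k X := fun X => by rw [← h, hi2]
  refine iso_of_adj Φ (iso_of_Sk hk1 hk _ fun X => le_antisymm ?_ ?_)
  · exact SkNorm_adj_le hk1 Φ (hsAdj Φ) (fun X Y => hs_hsAdj Φ X Y) h X
  · have := SkNorm_adj_le hk1 Φi (hsAdj Φi) (fun X Y => hs_hsAdj Φi X Y) hi (hsAdj Φ X)
    rwa [hsAdj_inv hi2] at this

theorem isometries_of_iso {m n k : ℕ} (hk1 : 1 ≤ k) (hk : k < min m n) (Φ : MM m n →ₗ[ℂ] MM m n)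
    (h : IsIsoComp m n k Φ) : (∀ X, SkNorm k (Φ X) = SkNorm k X) ∧
      (∀ X, gammaNorm k (Φ X) = gammaNorm k X) := by
  haveI : Nonempty (Fin m) := ⟨⟨0, by have := min_le_left m n; omega⟩⟩
  haveI : Nonempty (Fin n) := ⟨⟨0, by have := min_le_right m n; omega⟩⟩
  obtain ⟨F, F', hF, hF', h1, h2, h3, h4⟩ := h.props
  obtain rfl : F = Φ := DFunLike.coe_injective hF
  obtain ⟨F2, _, hF2, _, _, _, _, h5⟩ := hF'.props
  obtain rfl : F2 = F' := DFunLike.coe_injective hF2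
  have h3' : ∀ X Y, hs (F2 Y) X = hs Y (F X) := fun X Y => by
    rw [hs_symm, ← h3, ← hs_symm]
  refine ⟨fun X => le_antisymm ?_ ?_, fun X => le_antisymm ?_ ?_⟩
  · exact SkNorm_map_le hk1 F F2 h3' h5 X
  · have := SkNorm_map_le hk1 F2 F h3 h4 (F X)
    rwa [h2] at this
  · exact gammaNorm_map_le hk1 F h4 X
  · have := gammaNorm_map_le hk1 F2 h5 (F X)
    rwa [h2] at this

theorem main_aux {m n k : ℕ} (hk1 : 1 ≤ k) (hk : k < min m n) (Φ : MM m n →ₗ[ℂ] MM m n) :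
    ((∀ X, SkNorm k (Φ X) = SkNorm k X) ↔ (∀ X, gammaNorm k (Φ X) = gammaNorm k X)) ∧
    ((∀ X, SkNorm k (Φ X) = SkNorm k X) ↔ IsIsoComp m n k ⇑Φ) :=
  ⟨⟨fun h => (isometries_of_iso hk1 hk Φ (iso_of_Sk hk1 hk Φ h)).2,
    fun h => (isometries_of_iso hk1 hk Φ (iso_of_gamma hk1 hk Φ h)).1⟩,
   ⟨fun h => iso_of_Sk hk1 hk Φ h, fun h => (isometries_of_iso hk1 hk Φ h).1⟩⟩

/-- for a linear map Φ on M_m ⊗ M_n and 1 ≤ k < min(m,n), the following are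
equivalent: (a) Φ is an isometry of ‖·‖_{S(k)}; (b) Φ is an isometry of ‖·‖_{γ,k}; (c) Φ is a
composition of one or more maps of the form X ↦ UXV (U, V local unitaries, possibly with a
swap when m = n), the transpose, and (when k = 1 only) the partial transpose. -/
theorem isometry_SkNorm_iff {m n k : ℕ} (hk1 : 1 ≤ k) (hk : k < min m n)
    (Φ : Matrix (Fin m × Fin n) (Fin m × Fin n) ℂ →ₗ[ℂ]
      Matrix (Fin m × Fin n) (Fin m × Fin n) ℂ) :
    ((∀ X, SkNorm k (Φ X) = SkNorm k X) ↔ (∀ X, gammaNorm k (Φ X) = gammaNorm k X)) ∧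
    ((∀ X, SkNorm k (Φ X) = SkNorm k X) ↔ IsIsoComp m n k ⇑Φ) := by
  exact main_aux hk1 hk Φ

end Ent
end

section
/- For every X ∈ M_m ⊗ M_n, the realignment map preserves the projective tensor norm: ‖L(X)‖_γ = ‖X‖_{γ,1}, where on the left the γ-norm is computed with respect to the tensor factorization M_{m,n} ⊗ M_{m,n}. -/
open scoped Kronecker ComplexOrder
open Matrix

namespace Ent

variable {ι κ : Type*} [Fintype ι] [Fintype κ]

/-- Euclidean norm of a vector. -/
noncomputable def nv {ι : Type*} [Fintype ι] (v : ι → ℂ) : ℝ := Real.sqrt (∑ i, ‖v i‖ ^ 2)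

theorem nv_nonneg {ι : Type*} [Fintype ι] (v : ι → ℂ) : 0 ≤ nv v := Real.sqrt_nonneg _

theorem nv_sq {ι : Type*} [Fintype ι] (v : ι → ℂ) : nv v ^ 2 = ∑ i, ‖v i‖ ^ 2 :=
  Real.sq_sqrt (Finset.sum_nonneg fun _ _ => by positivity)

theorem vinner_self_s16 {ι : Type*} [Fintype ι] (v : ι → ℂ) : vinner v v = ((nv v ^ 2 : ℝ) : ℂ) := by
  rw [nv_sq]
  simp [vinner, dotProduct, Complex.conj_mul']

theorem nv_eq_one {ι : Type*} [Fintype ι] (v : ι → ℂ) : vinner v v = 1 ↔ nv v = 1 := by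
  rw [vinner_self_s16]
  constructor
  · intro h
    have h2 : nv v ^ 2 = 1 := by exact_mod_cast h
    have := nv_nonneg v
    nlinarith
  · intro h; simp [h]

theorem nv_smul {ι : Type*} [Fintype ι] (c : ℂ) (v : ι → ℂ) : nv (c • v) = ‖c‖ * nv v := by
  have : nv (c • v) ^ 2 = (‖c‖ * nv v) ^ 2 := by
    rw [nv_sq, mul_pow, nv_sq, Finset.mul_sum]
    simp [mul_pow]
  exact (pow_left_inj₀ (nv_nonneg _) (mul_nonneg (norm_nonneg _) (nv_nonneg _)) two_ne_zero).1 this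

theorem nv_star {ι : Type*} [Fintype ι] (v : ι → ℂ) : nv (star v) = nv v := by
  simp [nv]

theorem nv_eq_zero {ι : Type*} [Fintype ι] (v : ι → ℂ) (h : nv v = 0) : v = 0 := by
  have h1 := nv_sq v
  rw [h, zero_pow two_ne_zero, eq_comm, Finset.sum_eq_zero_iff_of_nonneg (fun _ _ => by positivity)] at h1
  funext i
  simpa using h1 i (Finset.mem_univ i)

theorem nv_prodVec {ι κ : Type*} [Fintype ι] [Fintype κ] (a : ι → ℂ) (b : κ → ℂ) :
    nv (prodVec a b) = nv a * nv b := by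
  have : nv (prodVec a b) ^ 2 = (nv a * nv b) ^ 2 := by
    rw [nv_sq, mul_pow, nv_sq, nv_sq, Finset.sum_mul_sum, Fintype.sum_prod_type]
    simp [prodVec, mul_pow]
  exact (pow_left_inj₀ (nv_nonneg _) (mul_nonneg (nv_nonneg _) (nv_nonneg _)) two_ne_zero).1 this

theorem schmidt_one {ι κ : Type*} (v : ι × κ → ℂ) :
    SchmidtRankLE 1 v ↔ ∃ a b, v = prodVec a b := by
  constructor
  · rintro ⟨a, b, h⟩
    exact ⟨a 0, b 0, by simpa using h⟩
  · rintro ⟨a, b, h⟩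
    exact ⟨fun _ => a, fun _ => b, by simpa using h⟩

theorem schmidt_smul {ι κ : Type*} (c : ℂ) (v : ι × κ → ℂ) (h : SchmidtRankLE 1 v) :
    SchmidtRankLE 1 (c • v) := by
  rw [schmidt_one] at *
  obtain ⟨a, b, rfl⟩ := h
  refine ⟨c • a, b, ?_⟩
  funext p
  simp [prodVec, mul_assoc]

/-- Singular value type decomposition. -/
theorem svd_like {m n : ℕ} (A : Matrix (Fin m) (Fin n) ℂ) :
    ∃ (a : Fin n → Fin m → ℂ) (b : Fin n → Fin n → ℂ),
      (∀ x y, A x y = ∑ j, a j x * b j y) ∧ traceNorm A = ∑ j, nv (a j) * nv (b j) := by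
  let hA := Matrix.isHermitian_conjTranspose_mul_self A
  let U : Matrix (Fin n) (Fin n) ℂ := hA.eigenvectorUnitary
  have hU1 : U * Uᴴ = 1 := Unitary.mul_star_self_of_mem hA.eigenvectorUnitary.2
  have hU2 : Uᴴ * U = 1 := Unitary.star_mul_self_of_mem hA.eigenvectorUnitary.2
  have hD : Uᴴ * (Aᴴ * A) * U = diagonal (fun j => (hA.eigenvalues j : ℂ)) := by
    have := hA.spectral_theorem
    rw [Unitary.conjStarAlgAut_apply] at this
    change Aᴴ * A = U * diagonal (fun j => (hA.eigenvalues j : ℂ)) * Uᴴ at this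
    calc Uᴴ * (Aᴴ * A) * U
        = Uᴴ * (U * diagonal (fun j => (hA.eigenvalues j : ℂ)) * Uᴴ) * U :=
          congrArg (fun M => Uᴴ * M * U) this
      _ = (Uᴴ * U) * diagonal (fun j => (hA.eigenvalues j : ℂ)) * (Uᴴ * U) := by
          simp only [Matrix.mul_assoc]
      _ = _ := by simp [hU2]
  have hD' : (A * U)ᴴ * (A * U) = diagonal (fun j => (hA.eigenvalues j : ℂ)) := by
    rw [← hD]; simp only [Matrix.conjTranspose_mul, Matrix.mul_assoc]
  refine ⟨fun j x => (A * U) x j, fun j y => Uᴴ j y, ?_, ?_⟩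
  · intro x y
    have : A = (A * U) * Uᴴ := by rw [Matrix.mul_assoc, hU1, Matrix.mul_one]
    conv_lhs => rw [this]
    rfl
  · unfold traceNorm
    refine Finset.sum_congr rfl fun j _ => ?_
    have h1 : nv (fun x => (A * U) x j) = Real.sqrt (hA.eigenvalues j) := by
      unfold nv
      congr 1
      have := congrFun (congrFun hD' j) j
      rw [Matrix.mul_apply, diagonal_apply_eq] at this
      simp only [conjTranspose_apply, RCLike.star_def, Complex.conj_mul'] at this
      exact_mod_cast this
    have h2 : nv (fun y => Uᴴ j y) = 1 := by
      rw [← nv_eq_one]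
      have := congrFun (congrFun hU2 j) j
      rw [Matrix.mul_apply, Matrix.one_apply_eq] at this
      rw [← this]
      simp [vinner, dotProduct, mul_comm]
    rw [h1, h2, mul_one]

theorem traceNorm_rank_one {m n : ℕ} (a : Fin m → ℂ) (b : Fin n → ℂ) :
    traceNorm (vecMulVec a b) = nv a * nv b := by
  set A := vecMulVec a b with hAdef
  let hA := Matrix.isHermitian_conjTranspose_mul_self A
  have hrank : (Aᴴ * A).rank ≤ 1 := by
    rw [Matrix.rank_conjTranspose_mul_self]
    exact rank_vecMulVec_le a b
  rw [hA.rank_eq_card_non_zero_eigs, Fintype.card_le_one_iff_subsingleton] at hrank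
  have hnn : ∀ j, 0 ≤ hA.eigenvalues j :=
    fun j => (Matrix.posSemidef_conjTranspose_mul_self A).eigenvalues_nonneg j
  have htr : ∑ j, hA.eigenvalues j = (nv a * nv b) ^ 2 := by
    have := hA.trace_eq_sum_eigenvalues
    rw [mul_pow, nv_sq, nv_sq]
    have h2 : (Aᴴ * A).trace = (((∑ i, ‖a i‖ ^ 2) * (∑ i, ‖b i‖ ^ 2) : ℝ) : ℂ) := by
      rw [Finset.sum_mul_sum, Finset.sum_comm]
      simp only [Matrix.trace, Matrix.diag, Matrix.mul_apply, conjTranspose_apply,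
        RCLike.star_def, Complex.conj_mul', hAdef, vecMulVec_apply]
      push_cast
      simp [mul_pow]
    rw [h2] at this
    have h3 : ((∑ j, hA.eigenvalues j : ℝ) : ℂ) =
        (((∑ i, ‖a i‖ ^ 2) * (∑ i, ‖b i‖ ^ 2) : ℝ) : ℂ) := by
      rw [this]; push_cast; rfl
    exact Complex.ofReal_injective h3
  change ∑ j, Real.sqrt (hA.eigenvalues j) = _
  have hpos : 0 ≤ nv a * nv b := mul_nonneg (nv_nonneg _) (nv_nonneg _)
  by_cases h : ∃ j, hA.eigenvalues j ≠ 0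
  · obtain ⟨j, hj⟩ := h
    have h0 : ∀ k, k ≠ j → hA.eigenvalues k = 0 := by
      intro k hk
      by_contra hne
      exact hk (congrArg Subtype.val (hrank.elim ⟨k, hne⟩ ⟨j, hj⟩))
    rw [Finset.sum_eq_single j (fun k _ hk => h0 k hk) (by simp)] at htr
    rw [Finset.sum_eq_single j (fun k _ hk => by rw [h0 k hk, Real.sqrt_zero]) (by simp), htr,
      Real.sqrt_sq hpos]
  · push Not at h
    simp only [h, Finset.sum_const_zero] at htr
    simp only [h, Real.sqrt_zero, Finset.sum_const_zero]
    exact (pow_eq_zero_iff two_ne_zero).1 htr.symm |>.symm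

theorem sum_sub {I M : Type*} [Fintype I] [AddCommMonoid M] (P : I → Prop) [DecidablePred P]
    (f : I → M) (h : ∀ i, ¬ P i → f i = 0) : ∑ s : {i // P i}, f s = ∑ i, f i := by
  rw [← Finset.sum_subtype (Finset.univ.filter P) (by simp) f]
  exact Finset.sum_subset (Finset.filter_subset _ _) (fun i _ hi => h i (by simpa using hi))

theorem mem_gamma {ι κ I : Type*} [Fintype ι] [Fintype κ] [Fintype I]
    (X : Matrix (ι × κ) (ι × κ) ℂ) (v w : I → ι × κ → ℂ)
    (hv : ∀ i, SchmidtRankLE 1 (v i)) (hw : ∀ i, SchmidtRankLE 1 (w i))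
    (hX : X = ∑ i, ketBra (v i) (w i)) :
    ∃ (N : ℕ) (c : Fin N → ℂ) (v' w' : Fin N → (ι × κ → ℂ)),
    (∀ i, vinner (v' i) (v' i) = 1 ∧ vinner (w' i) (w' i) = 1 ∧
      SchmidtRankLE 1 (v' i) ∧ SchmidtRankLE 1 (w' i)) ∧
    X = ∑ i, c i • ketBra (v' i) (w' i) ∧
    ∑ i, nv (v i) * nv (w i) = ∑ i, ‖c i‖ := by
  classical
  let S := {i : I // nv (v i) * nv (w i) ≠ 0}
  let e : Fin (Fintype.card S) ≃ S := (Fintype.equivFin S).symm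
  have hnorm : ∀ u : ι × κ → ℂ, nv u ≠ 0 →
      vinner (((nv u : ℂ)⁻¹) • u) (((nv u : ℂ)⁻¹) • u) = 1 := by
    intro u hu
    rw [nv_eq_one, nv_smul, norm_inv, Complex.norm_real, Real.norm_of_nonneg (nv_nonneg _),
      inv_mul_cancel₀ hu]
  refine ⟨Fintype.card S, fun i => ((nv (v (e i)) * nv (w (e i)) : ℝ) : ℂ),
    fun i => ((nv (v (e i)) : ℂ)⁻¹) • v (e i), fun i => ((nv (w (e i)) : ℂ)⁻¹) • w (e i),
    fun i => ⟨hnorm _ (left_ne_zero_of_mul (e i).2), hnorm _ (right_ne_zero_of_mul (e i).2),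
      schmidt_smul _ _ (hv _), schmidt_smul _ _ (hw _)⟩, ?_, ?_⟩
  · rw [hX, e.sum_comp (fun s : S => ((nv (v s) * nv (w s) : ℝ) : ℂ) •
      ketBra (((nv (v s) : ℂ)⁻¹) • v s) (((nv (w s) : ℂ)⁻¹) • w s))]
    have h1 : ∀ s : S, ((nv (v s) * nv (w s) : ℝ) : ℂ) •
      ketBra (((nv (v s) : ℂ)⁻¹) • v s) (((nv (w s) : ℂ)⁻¹) • w s) = ketBra (v s) (w s) := by
      intro s
      have ha : (nv (v s) : ℂ) ≠ 0 := by exact_mod_cast left_ne_zero_of_mul s.2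
      have hb : (nv (w s) : ℂ) ≠ 0 := by exact_mod_cast right_ne_zero_of_mul s.2
      ext p q
      simp [ketBra, vecMulVec_apply]
      field_simp
    simp only [h1]
    refine (sum_sub _ (fun i => ketBra (v i) (w i)) ?_).symm
    intro i hi
    rw [not_not, mul_eq_zero] at hi
    ext p q
    rcases hi with hi | hi <;> simp [ketBra, vecMulVec_apply, nv_eq_zero _ hi]
  · rw [e.sum_comp (fun s : S => ‖((nv (v s) * nv (w s) : ℝ) : ℂ)‖)]
    have h1 : ∀ s : S, ‖((nv (v s) * nv (w s) : ℝ) : ℂ)‖ = nv (v s) * nv (w s) := by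
      intro s
      rw [Complex.norm_real, Real.norm_of_nonneg (mul_nonneg (nv_nonneg _) (nv_nonneg _))]
    simp only [h1]
    exact (sum_sub _ (fun i => nv (v i) * nv (w i)) (fun i hi => not_not.1 hi)).symm

/-- the realignment map preserves the projective tensor norm:
‖L(X)‖_γ = ‖X‖_{γ,1}. -/
theorem projNorm_realign {m n : ℕ} (X : Matrix (Fin m × Fin n) (Fin m × Fin n) ℂ) :
    projNorm (realign X) = gammaNorm 1 X := by
  unfold projNorm gammaNorm
  congr 1
  ext r
  constructor
  · rintro ⟨N, A, B, hZ, rfl⟩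
    choose a b hab htA using fun i => svd_like (A i)
    choose c d hcd htB using fun i => svd_like (B i)
    have hX : X = ∑ t : Fin N × Fin n × Fin n,
        ketBra (prodVec (a t.1 t.2.1) (b t.1 t.2.1))
          (prodVec (star (c t.1 t.2.2)) (star (d t.1 t.2.2))) := by
      ext p q
      have h := congrFun (congrFun hZ (p.1, q.1)) (p.2, q.2)
      change X p q = _ at h
      rw [h]
      simp only [Matrix.sum_apply, kroneckerMap_apply, hab, hcd, Finset.sum_mul_sum,
        Fintype.sum_prod_type, ketBra, vecMulVec_apply, prodVec, Pi.star_apply, star_mul',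
        star_star]
    obtain ⟨N', c', v', w', h1, h2, h3⟩ := mem_gamma X _ _
      (fun t => (schmidt_one _).2 ⟨_, _, rfl⟩) (fun t => (schmidt_one _).2 ⟨_, _, rfl⟩) hX
    refine ⟨N', c', v', w', h1, h2, ?_⟩
    rw [← h3]
    simp only [nv_prodVec, nv_star, htA, htB, Finset.sum_mul_sum, Fintype.sum_prod_type]
  · rintro ⟨N, c, v, w, h, hX, rfl⟩
    choose a b hv using fun i => (schmidt_one _).1 (h i).2.2.1
    choose a' b' hw using fun i => (schmidt_one _).1 (h i).2.2.2
    refine ⟨N, fun i => vecMulVec (c i • a i) (b i),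
      fun i => vecMulVec (star (a' i)) (star (b' i)), ?_, ?_⟩
    · ext p q
      rw [hX]
      simp only [realign, Matrix.sum_apply, kroneckerMap_apply, ketBra, vecMulVec_apply,
        Matrix.smul_apply, hv, hw, prodVec, Pi.star_apply, Pi.smul_apply, star_mul', smul_eq_mul]
      exact Finset.sum_congr rfl fun i _ => by ring
    · refine Finset.sum_congr rfl fun i _ => ?_
      have h1 := (nv_eq_one _).1 (h i).1
      have h2 := (nv_eq_one _).1 (h i).2.1
      rw [hv, nv_prodVec] at h1
      rw [hw, nv_prodVec] at h2
      rw [traceNorm_rank_one, traceNorm_rank_one, nv_smul, nv_star, nv_star, h2, mul_one, mul_assoc, h1,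
        mul_one]

end Ent
end

section
/- Let ρ ∈ M_m ⊗ M_n be a density matrix and fix 1 ≤ k ≤ min(m,n). If SN(ρ) ≤ k, then ‖L(ρ)‖_{(k²,2)}° ≤ 1, where ‖·‖_{(k²,2)}° is the dual of the (k²,2)-norm on the m² × n² matrix L(ρ). -/
open scoped Kronecker ComplexOrder
open Matrix

namespace Ent

variable {ι κ : Type*} [Fintype ι] [Fintype κ]

/-- Key estimate: a bound on the trace pairing by the `(k,2)`-norm. -/
lemma norm_trace_le_kNorm (k : ℕ) (W : Matrix ι κ ℂ) (Y : Matrix κ ι ℂ)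
    (hr : Y.rank ≤ k) (hf : frobNorm Y ≤ 1) : ‖(W * Y).trace‖ ≤ kNorm k W := by
  unfold kNorm
  refine le_csSup ⟨∑ i, ∑ j, ‖W i j‖, ?_⟩ ⟨Y, hr, hf, rfl⟩
  rintro r ⟨Z, -, hZ, rfl⟩
  have hent : ∀ j i, ‖Z j i‖ ≤ 1 := by
    intro j i
    refine le_trans ?_ hZ
    unfold frobNorm
    apply Real.le_sqrt_of_sq_le
    rw [← Complex.normSq_eq_norm_sq]
    calc Complex.normSq (Z j i) ≤ ∑ i, Complex.normSq (Z j i) :=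
          Finset.single_le_sum (f := fun i => Complex.normSq (Z j i))
            (fun _ _ => Complex.normSq_nonneg _) (Finset.mem_univ i)
      _ ≤ _ := Finset.single_le_sum (f := fun j => ∑ i, Complex.normSq (Z j i))
            (fun _ _ => Finset.sum_nonneg fun _ _ => Complex.normSq_nonneg _)
            (Finset.mem_univ j)
  simp only [Matrix.trace, Matrix.diag_apply, Matrix.mul_apply]
  refine (norm_sum_le _ _).trans (Finset.sum_le_sum fun i _ => ?_)
  refine (norm_sum_le _ _).trans (Finset.sum_le_sum fun j _ => ?_)
  rw [norm_mul]
  exact mul_le_of_le_one_right (norm_nonneg _) (hent j i)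

lemma frobNorm_realign {m n : ℕ} (v : Fin m × Fin n → ℂ) (hv : vinner v v = 1) :
    frobNorm (realign (ketBra v v))ᴴ ≤ 1 := by
  have h1 : ∑ p, Complex.normSq (v p) = 1 := by
    have h := congrArg Complex.re hv
    simp only [vinner, dotProduct, Pi.star_apply, Complex.re_sum, Complex.one_re] at h
    rw [← h]
    refine Finset.sum_congr rfl fun p _ => ?_
    simp [Complex.normSq_apply]
  unfold frobNorm
  refine Real.sqrt_le_one.mpr (le_of_eq ?_)
  rw [Fintype.sum_prod_type] at h1
  calc _ = ∑ q : Fin n × Fin n, ∑ p : Fin m × Fin m,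
        Complex.normSq (v (p.1, q.1)) * Complex.normSq (v (p.2, q.2)) := by
        refine Finset.sum_congr rfl fun q _ => Finset.sum_congr rfl fun p _ => ?_
        simp [realign, ketBra, Matrix.vecMulVec_apply, Complex.normSq_conj]
    _ = (∑ i, ∑ j, Complex.normSq (v (i, j))) * (∑ i, ∑ j, Complex.normSq (v (i, j))) := by
        rw [Finset.sum_comm, Fintype.sum_prod_type, Finset.sum_mul_sum]
        refine Finset.sum_congr rfl fun i _ => Finset.sum_congr rfl fun i' _ => ?_
        rw [Fintype.sum_prod_type, Finset.sum_mul_sum]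
    _ = 1 := by rw [h1, one_mul]

lemma rank_realign {m n k : ℕ} (v : Fin m × Fin n → ℂ) (hv : SchmidtRankLE k v) :
    ((realign (ketBra v v))ᴴ).rank ≤ k ^ 2 := by
  obtain ⟨a, b, rfl⟩ := hv
  rw [Matrix.rank_conjTranspose]
  have : realign (ketBra (∑ i, prodVec (a i) (b i)) (∑ i, prodVec (a i) (b i))) =
      (Matrix.of fun (p : Fin m × Fin m) (s : Fin k × Fin k) =>
        a s.1 p.1 * star (a s.2 p.2)) *
      (Matrix.of fun (s : Fin k × Fin k) (q : Fin n × Fin n) =>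
        b s.1 q.1 * star (b s.2 q.2)) := by
    ext p q
    simp only [realign, ketBra, Matrix.vecMulVec_apply, Matrix.mul_apply, Matrix.of_apply,
      Finset.sum_apply, Pi.star_apply, prodVec, star_sum, star_mul', Finset.sum_mul_sum,
      Fintype.sum_prod_type]
    refine Finset.sum_congr rfl fun i _ => Finset.sum_congr rfl fun j _ => ?_
    ring
  rw [this]
  refine (Matrix.rank_mul_le_left _ _).trans ((Matrix.rank_le_card_width _).trans ?_)
  simp [sq]

/-- if `ρ` is a density matrix with `SN(ρ) ≤ k`, then
`‖L(ρ)‖_{(k²,2)}° ≤ 1`. -/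
theorem dual_k2_realign_le_one {m n k : ℕ} (hk1 : 1 ≤ k) (hk : k ≤ min m n)
    (ρ : Matrix (Fin m × Fin n) (Fin m × Fin n) ℂ) (hρ : IsDensity ρ)
    (hSN : SchmidtNumLE k ρ) :
    dualNormM (kNorm (k ^ 2)) (realign ρ) ≤ 1 := by
  unfold dualNormM
  refine Real.sSup_le ?_ zero_le_one
  rintro r ⟨W, hW, rfl⟩
  obtain ⟨N, p, v, hv, hp, rfl⟩ := hSN
  have hlin : realign (∑ i, p i • ketBra (v i) (v i)) =
      ∑ i, p i • realign (ketBra (v i) (v i)) := by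
    ext x y
    simp [realign, Matrix.sum_apply]
  have hterm : ∀ i, ‖(Wᴴ * realign (ketBra (v i) (v i))).trace‖ ≤ 1 := by
    intro i
    have h := norm_trace_le_kNorm (k ^ 2) W (realign (ketBra (v i) (v i)))ᴴ
      (rank_realign _ (hv i).2.2) (frobNorm_realign _ (hv i).2.1)
    have he : (Wᴴ * realign (ketBra (v i) (v i))).trace =
        star (W * (realign (ketBra (v i) (v i)))ᴴ).trace := by
      rw [← Matrix.trace_conjTranspose, Matrix.conjTranspose_mul,
        Matrix.conjTranspose_conjTranspose, Matrix.trace_mul_comm]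
    rw [he, norm_star]
    exact h.trans hW
  rw [hlin, Matrix.mul_sum, Matrix.trace_sum]
  calc _ ≤ ∑ i, ‖(Wᴴ * p i • realign (ketBra (v i) (v i))).trace‖ := norm_sum_le _ _
    _ ≤ ∑ i, p i := by
        refine Finset.sum_le_sum fun i _ => ?_
        rw [Matrix.mul_smul, Matrix.trace_smul, norm_smul, Real.norm_of_nonneg (hv i).1]
        exact mul_le_of_le_one_right (hv i).1 (hterm i)
    _ = 1 := hp

end Ent
end
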